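/- arXiv:1411.0251 — 11 statements merged into one kernel-verified Lean document; each statement's English description precedes it below -/
import Mathlib

section
/- Let d, N ≥ 1 and let P ∈ ℂ^{(d+N)×(d+N)} be a symmetric matrix written in block form P = [[P_xx, P_xθ],[P_θx, P_θθ]] with P_xx ∈ ℂ^{d×d}, P_xθ ∈ ℂ^{d×N}, P_θx = (P_xθ)^t ∈ ℂ^{N×d}, P_θθ ∈ ℂ^{N×N}. Assume the N rows of the block matrix (P_θx P_θθ) ∈ ℂ^{N×(d+N)} are linearly independent over ℂ. Let p be the quadratic form p(x,θ) = ⟨(x,θ), P(x,θ)⟩, so that its gradients are p'_x(x,θ) = 2(P_xx x + P_xθ θ) and p'_θ(x,θ) = 2(P_θx x + P_θθ θ). Then there exist matrices A ∈ ℂ^{N×d}, B ∈ ℂ^{N×d} and C ∈ ℂ^{N×N} such that θ = A x + B p'_x(x,θ) + C p'_θ(x,θ) for all x ∈ ℝ^d and θ ∈ ℝ^N. -/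
open Matrix

/-!
By symmetry of `P`, linear independence of its bottom rows `(P_θx  P_θθ)` is linear independence of
the columns of its right block `(P_xθ; P_θθ)`, which therefore has a left inverse `L`.
Applying `L` to `P (x, θ) = (P_xx; P_θx) x + (P_xθ; P_θθ) θ` isolates `θ`.
-/

theorem exists_mul_eq_one_of_linearIndependent_col {K m n : Type*} [Field K] [Fintype m]
    [DecidableEq n] {M : Matrix m n K} (hM : LinearIndependent K M.col) :
    ∃ L : Matrix n m K, L * M = 1 := by
  classical
  have := hM.finite
  have := Fintype.ofFinite n
  obtain ⟨g, hg⟩ := (toLin' M).exists_leftInverse_of_injective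
    (LinearMap.ker_eq_bot.2 (mulVec_injective_iff.2 hM))
  refine ⟨LinearMap.toMatrix' g, ?_⟩
  rw [← LinearMap.toMatrix'_toLin' M, ← LinearMap.toMatrix'_comp, hg, LinearMap.toMatrix'_id]

section Blocks

variable {R k m n : Type*} [Fintype m] [Fintype n]

theorem mulVec_sumElim_eq_add [Semiring R] (M : Matrix k (m ⊕ n) R) (x : m → R)
    (θ : n → R) : M *ᵥ Sum.elim x θ = M.toCols₁ *ᵥ x + M.toCols₂ *ᵥ θ := by
  rw [← fromCols_mulVec_sumElim, fromCols_toCols]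

theorem eq_neg_mulVec_add_mulVec_of_mul_toCols₂_eq_one [Ring R] [Fintype k] [DecidableEq n]
    {L : Matrix n k R} {M : Matrix k (m ⊕ n) R} (hL : L * M.toCols₂ = 1) (x : m → R) (θ : n → R) :
    θ = -(L * M.toCols₁) *ᵥ x + L *ᵥ (M *ᵥ Sum.elim x θ) := by
  rw [mulVec_sumElim_eq_add, mulVec_add, mulVec_mulVec, mulVec_mulVec, hL, one_mulVec, neg_mulVec,
    neg_add_cancel_left]

theorem mulVec_eq_inv_smul_toCols_mulVec_smul [Field R] {c : R} (hc : c ≠ 0)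
    (L : Matrix k (m ⊕ n) R) (v : m ⊕ n → R) :
    L *ᵥ v = (c⁻¹ • L.toCols₁) *ᵥ (c • v ∘ Sum.inl) + (c⁻¹ • L.toCols₂) *ᵥ (c • v ∘ Sum.inr) := by
  simp only [smul_mulVec, mulVec_smul, smul_inv_smul₀ hc]
  rw [← fromCols_mulVec, fromCols_toCols]

end Blocks

theorem stmt_0_general {K m n : Type*} [Field K] [Fintype m] [Fintype n] (h2 : (2 : K) ≠ 0)
    {P : Matrix (m ⊕ n) (m ⊕ n) K} (hP : P.IsSymm) (hrows : LinearIndependent K P.toRows₂.row) :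
    ∃ (A B : Matrix n m K) (C : Matrix n n K), ∀ (x : m → K) (θ : n → K),
      θ = A *ᵥ x + B *ᵥ ((2 : K) • (P *ᵥ Sum.elim x θ) ∘ Sum.inl)
        + C *ᵥ ((2 : K) • (P *ᵥ Sum.elim x θ) ∘ Sum.inr) := by
  classical
  have hcols : LinearIndependent K P.toCols₂.col := by
    have hcol_eq_row : P.toCols₂.col = P.toRows₂.row := funext₂ fun i j => hP.apply (Sum.inr i) j
    rwa [hcol_eq_row]
  obtain ⟨L, hL⟩ := exists_mul_eq_one_of_linearIndependent_col hcols
  refine ⟨-(L * P.toCols₁), (2 : K)⁻¹ • L.toCols₁, (2 : K)⁻¹ • L.toCols₂, fun x θ => ?_⟩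
  rw [add_assoc, ← mulVec_eq_inv_smul_toCols_mulVec_smul h2]
  exact eq_neg_mulVec_add_mulVec_of_mul_toCols₂_eq_one hL x θ

/-- Lemma: solving for θ from the gradients of a quadratic form with
Gaussian generator matrix.  Let `P` be a symmetric complex `(d+N)×(d+N)` matrix, indexed by
`Fin d ⊕ Fin N`, whose bottom `N` rows `(P_θx  P_θθ)` are linearly independent over `ℂ`.
Writing `p(x,θ) = ⟨(x,θ), P(x,θ)⟩`, the gradients are `p'_x(x,θ) = 2(P_xx x + P_xθ θ)`
(the `Sum.inl` components of `2 P (x,θ)`) and `p'_θ(x,θ) = 2(P_θx x + P_θθ θ)`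
(the `Sum.inr` components).  Then there exist matrices `A, B ∈ ℂ^{N×d}` and `C ∈ ℂ^{N×N}`
with `θ = A x + B p'_x(x,θ) + C p'_θ(x,θ)` for all real `x, θ`. -/
theorem stmt_0 (d N : ℕ) (hd : 1 ≤ d) (hN : 1 ≤ N)
    (P : Matrix (Fin d ⊕ Fin N) (Fin d ⊕ Fin N) ℂ) (hP : P.IsSymm)
    (hrows : LinearIndependent ℂ (fun i : Fin N => P (Sum.inr i))) :
    ∃ (A B : Matrix (Fin N) (Fin d) ℂ) (C : Matrix (Fin N) (Fin N) ℂ),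
      ∀ (x : Fin d → ℝ) (θ : Fin N → ℝ),
        (fun i : Fin N => (θ i : ℂ)) =
          A.mulVec (fun j : Fin d => (x j : ℂ))
          + B.mulVec (fun j : Fin d =>
              2 * P.mulVec (Sum.elim (fun j' : Fin d => (x j' : ℂ))
                  (fun i' : Fin N => (θ i' : ℂ))) (Sum.inl j))
          + C.mulVec (fun i : Fin N =>
              2 * P.mulVec (Sum.elim (fun j' : Fin d => (x j' : ℂ))
                  (fun i' : Fin N => (θ i' : ℂ))) (Sum.inr i)) := by
  obtain ⟨A, B, C, hABC⟩ := stmt_0_general two_ne_zero hP hrows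
  exact ⟨A, B, C, fun x θ => hABC (fun j => x j) (fun i => θ i)⟩
end

section
/- Let λ ⊆ ℂ^d × ℂ^d be a positive Lagrangian subspace and suppose its projection λ₁ = { x ∈ ℂ^d : (x,ξ) ∈ λ for some ξ ∈ ℂ^d } equals ℂ^k × {0} ⊆ ℂ^k × ℂ^{d−k} = ℂ^d for some 0 ≤ k ≤ d (write points of ℂ^d × ℂ^d as (x', x'', ξ', ξ'') with x', ξ' ∈ ℂ^k and x'', ξ'' ∈ ℂ^{d−k}). If k = 0 then λ = {0} × ℂ^d. If 1 ≤ k ≤ d then there exists a symmetric matrix Q ∈ ℂ^{k×k} with Im Q positive semidefinite such that λ = { (x', 0, Q x', ξ'') : x' ∈ ℂ^k, ξ'' ∈ ℂ^{d−k} }. -/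
open Matrix Complex

namespace Stmt1

/-- Bilinear (non-sesquilinear) pairing `⟨u,v⟩ = Σ_j u_j v_j` on `ℂ^d`. -/
noncomputable def pairC {d : ℕ} (u v : Fin d → ℂ) : ℂ := ∑ j, u j * v j

/-- Canonical symplectic form `σ((x,ξ),(x',ξ')) = ⟨x',ξ⟩ − ⟨x,ξ'⟩` on `ℂ^d × ℂ^d`. -/
noncomputable def sform {d : ℕ} (X Y : (Fin d → ℂ) × (Fin d → ℂ)) : ℂ :=
  pairC Y.1 X.2 - pairC X.1 Y.2

/-- A complex subspace `λ ⊆ ℂ^d × ℂ^d` is Lagrangian if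
`λ = { X : σ(X,Y) = 0 for all Y ∈ λ }`. -/
def IsLagrangian {d : ℕ} (lam : Submodule ℂ ((Fin d → ℂ) × (Fin d → ℂ))) : Prop :=
  ∀ X, X ∈ lam ↔ ∀ Y ∈ lam, sform X Y = 0

/-- A Lagrangian is positive if `i σ(X̄, X)` is a nonnegative real number for all `X ∈ λ`,
where `X̄` is the entrywise complex conjugate. -/
def IsPositive {d : ℕ} (lam : Submodule ℂ ((Fin d → ℂ) × (Fin d → ℂ))) : Prop :=
  ∀ X ∈ lam, ∃ r : ℝ, 0 ≤ r ∧
    Complex.I * sform (fun j => starRingEnd ℂ (X.1 j), fun j => starRingEnd ℂ (X.2 j)) X = r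

/-!
A Lagrangian is maximal among isotropic subspaces, so it suffices to place `λ` inside the
isotropic subspace `{(x', 0, Q x', ξ'')}`. For each basis vector `eᵢ` of `λ₁` choose a lift
`(eᵢ, ηᵢ) ∈ λ`, and let the first `k` entries of `ηᵢ` be the `i`-th row of `Q`. Pairing a point of
`λ` with the lifts expresses `ξ'` as `Q x'`, and pairing the lifts with each other shows that `Q`
is symmetric. Finally `i σ(X̄, X) = 2 Im ⟨x̄, ξ⟩`, which for real `x'` is `2 ⟨x', (Im Q) x'⟩`.
-/

section DotProduct

variable {m n R : Type*} [Fintype m] [Fintype n]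

theorem dotProduct_comp_of_eq_zero [NonUnitalNonAssocSemiring R] {e : m → n}
    (he : Function.Injective e) {u : n → R} (hu : ∀ j ∉ Set.range e, u j = 0) (v : n → R) :
    (u ∘ e) ⬝ᵥ (v ∘ e) = u ⬝ᵥ v :=
  Fintype.sum_of_injective e he _ _ (fun j hj => by rw [hu j hj, zero_mul]) fun _ => rfl

theorem im_ofReal_dotProduct_mulVec (A : Matrix m n ℂ) (x : m → ℝ) (y : n → ℝ) :
    ((ofReal ∘ x) ⬝ᵥ A *ᵥ (ofReal ∘ y)).im = x ⬝ᵥ A.map im *ᵥ y := by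
  simp only [dotProduct, mulVec, im_sum, Function.comp_apply, im_ofReal_mul, im_mul_ofReal,
    map_apply]

end DotProduct

section Symplectic

variable {d : ℕ} {lam : Submodule ℂ ((Fin d → ℂ) × (Fin d → ℂ))}

theorem sform_eq_dotProduct_sub (X Y : (Fin d → ℂ) × (Fin d → ℂ)) :
    sform X Y = Y.1 ⬝ᵥ X.2 - X.1 ⬝ᵥ Y.2 :=
  rfl

theorem I_mul_sform_star_self (X : (Fin d → ℂ) × (Fin d → ℂ)) :
    I * sform (star X) X = ((2 * (star X.1 ⬝ᵥ X.2).im : ℝ) : ℂ) := by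
  have hconj : X.1 ⬝ᵥ star X.2 = star (star X.1 ⬝ᵥ X.2) := by
    rw [star_dotProduct, star_star, dotProduct_comm]
  rw [sform_eq_dotProduct_sub, Prod.snd_star, Prod.fst_star, hconj]
  apply Complex.ext <;> simp [two_mul]

theorem IsPositive.im_star_dotProduct_nonneg (hPos : IsPositive lam)
    {X : (Fin d → ℂ) × (Fin d → ℂ)} (hX : X ∈ lam) : 0 ≤ (star X.1 ⬝ᵥ X.2).im := by
  obtain ⟨r, hr, hXr⟩ := hPos X hX
  have htwo : 2 * (star X.1 ⬝ᵥ X.2).im = r :=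
    ofReal_injective ((I_mul_sform_star_self X).symm.trans hXr)
  linarith

/-- A subspace of `ℂ^d × ℂ^d` is isotropic if the symplectic form vanishes identically on it. -/
def IsIsotropic (lam : Submodule ℂ ((Fin d → ℂ) × (Fin d → ℂ))) : Prop :=
  ∀ X ∈ lam, ∀ Y ∈ lam, sform X Y = 0

theorem IsLagrangian.isIsotropic (hLag : IsLagrangian lam) : IsIsotropic lam :=
  fun X hX => (hLag X).1 hX

theorem IsLagrangian.eq_of_le_of_isIsotropic {mu : Submodule ℂ ((Fin d → ℂ) × (Fin d → ℂ))}
    (hLag : IsLagrangian lam) (hle : lam ≤ mu) (hmu : IsIsotropic mu) : lam = mu :=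
  le_antisymm hle fun X hX => (hLag X).2 fun Y hY => hmu X hX Y (hle hY)

end Symplectic

section PhaseGraph

variable {d : ℕ} {ι : Type*} [Fintype ι] {e : ι → Fin d} {Q : Matrix ι ι ℂ}
  {lam : Submodule ℂ ((Fin d → ℂ) × (Fin d → ℂ))}

/-- The subspace `{(x', 0, Q x', ξ'')}` of `ℂ^d × ℂ^d`, where the single-primed coordinates are
those in the range of `e` and the double-primed ones are the others. -/
def phaseGraph (e : ι → Fin d) (Q : Matrix ι ι ℂ) :
    Submodule ℂ ((Fin d → ℂ) × (Fin d → ℂ)) where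
  carrier := {X | (∀ j ∉ Set.range e, X.1 j = 0) ∧ X.2 ∘ e = Q *ᵥ (X.1 ∘ e)}
  zero_mem' := ⟨fun _ _ => rfl, (mulVec_zero Q).symm⟩
  add_mem' {X Y} hX hY :=
    ⟨fun j hj => by simp [hX.1 j hj, hY.1 j hj],
      (congrArg₂ (· + ·) hX.2 hY.2).trans (mulVec_add Q _ _).symm⟩
  smul_mem' c X hX :=
    ⟨fun j hj => by simp [hX.1 j hj], (congrArg (c • ·) hX.2).trans (mulVec_smul Q c _).symm⟩

theorem mem_phaseGraph {X : (Fin d → ℂ) × (Fin d → ℂ)} :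
    X ∈ phaseGraph e Q ↔ (∀ j ∉ Set.range e, X.1 j = 0) ∧ X.2 ∘ e = Q *ᵥ (X.1 ∘ e) :=
  Iff.rfl

theorem mem_phaseGraph_of_isEmpty [IsEmpty ι] {X : (Fin d → ℂ) × (Fin d → ℂ)} :
    X ∈ phaseGraph e Q ↔ X.1 = 0 := by
  simp [mem_phaseGraph, funext_iff]

theorem mem_phaseGraph_castLE {k : ℕ} (hk : k ≤ d) {Q : Matrix (Fin k) (Fin k) ℂ}
    {X : (Fin d → ℂ) × (Fin d → ℂ)} :
    X ∈ phaseGraph (Fin.castLE hk) Q ↔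
      (∀ j : Fin d, k ≤ (j : ℕ) → X.1 j = 0) ∧
        ∀ j : Fin d, (h : (j : ℕ) < k) →
          X.2 j = ∑ i : Fin k, Q ⟨(j : ℕ), h⟩ i * X.1 (Fin.castLE hk i) := by
  simp only [mem_phaseGraph, Fin.range_castLE, Set.mem_ofPred_eq, not_lt]
  exact and_congr_right fun _ =>
    ⟨fun hQ j h => congrFun hQ ⟨j, h⟩, fun hQ => funext fun i => hQ (Fin.castLE hk i) i.2⟩

theorem isIsotropic_phaseGraph (he : Function.Injective e) (hQ : Q.IsSymm) :
    IsIsotropic (phaseGraph e Q) := by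
  intro X hX Y hY
  rw [sform_eq_dotProduct_sub, ← dotProduct_comp_of_eq_zero he hX.1,
    ← dotProduct_comp_of_eq_zero he hY.1, hX.2, hY.2, sub_eq_zero,
    dotProduct_mulVec, ← mulVec_transpose, hQ.eq, dotProduct_comm]

theorem IsIsotropic.exists_isSymm_le_phaseGraph (hIso : IsIsotropic lam)
    (he : Function.Injective e)
    (hproj : {x | ∃ ξ, (x, ξ) ∈ lam} = {x | ∀ j ∉ Set.range e, x j = 0}) :
    ∃ Q : Matrix ι ι ℂ, Q.IsSymm ∧ lam ≤ phaseGraph e Q := by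
  have hlift (i : ι) : ∃ ξ, (Pi.single (e i) 1, ξ) ∈ lam :=
    hproj.ge fun j hj => Pi.single_eq_of_ne (fun h => hj ⟨i, h.symm⟩) 1
  choose η hη using hlift
  have hpair {X : (Fin d → ℂ) × (Fin d → ℂ)} (hX : X ∈ lam) (i : ι) :
      X.2 (e i) = X.1 ⬝ᵥ η i := by
    have hsform := hIso X hX _ (hη i)
    rwa [sform_eq_dotProduct_sub, single_one_dotProduct, sub_eq_zero] at hsform
  refine ⟨of fun i j => η i (e j), IsSymm.ext fun i j => ?_, fun X hX => ?_⟩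
  · exact (hpair (hη j) i).trans (single_one_dotProduct _ _)
  · have hX₁ : ∀ j ∉ Set.range e, X.1 j = 0 := hproj.le ⟨X.2, hX⟩
    refine ⟨hX₁, funext fun i => ?_⟩
    calc X.2 (e i) = X.1 ⬝ᵥ η i := hpair hX i
      _ = (X.1 ∘ e) ⬝ᵥ (η i ∘ e) := (dotProduct_comp_of_eq_zero he hX₁ _).symm
      _ = (η i ∘ e) ⬝ᵥ (X.1 ∘ e) := dotProduct_comm _ _

theorem IsLagrangian.exists_isSymm_eq_phaseGraph (hLag : IsLagrangian lam)
    (he : Function.Injective e)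
    (hproj : {x | ∃ ξ, (x, ξ) ∈ lam} = {x | ∀ j ∉ Set.range e, x j = 0}) :
    ∃ Q : Matrix ι ι ℂ, Q.IsSymm ∧ lam = phaseGraph e Q := by
  obtain ⟨Q, hQ, hle⟩ := hLag.isIsotropic.exists_isSymm_le_phaseGraph he hproj
  exact ⟨Q, hQ, hLag.eq_of_le_of_isIsotropic hle (isIsotropic_phaseGraph he hQ)⟩

theorem exists_mem_phaseGraph_comp_eq (he : Function.Injective e) (Q : Matrix ι ι ℂ)
    (x : ι → ℂ) : ∃ X ∈ phaseGraph e Q, X.1 ∘ e = x := by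
  have hfst : Function.extend e x 0 ∘ e = x := Function.extend_comp he x 0
  refine ⟨(Function.extend e x 0, Function.extend e (Q *ᵥ x) 0), ⟨fun j hj => ?_, ?_⟩, hfst⟩
  · exact Function.extend_apply' _ _ _ hj
  · rw [hfst, Function.extend_comp he]

theorem posSemidef_im_of_isPositive_phaseGraph (he : Function.Injective e) (hQ : Q.IsSymm)
    (hPos : IsPositive (phaseGraph e Q)) : (Q.map im).PosSemidef := by
  refine .of_dotProduct_mulVec_nonneg (isHermitian_iff_isSymm.2 (hQ.map im)) fun x => ?_
  obtain ⟨X, hX, hXx⟩ := exists_mem_phaseGraph_comp_eq he Q (ofReal ∘ x)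
  have hstar : star X.1 ∘ e = ofReal ∘ x :=
    (congrArg star hXx).trans (funext fun i => conj_ofReal (x i))
  calc 0 ≤ (star X.1 ⬝ᵥ X.2).im := hPos.im_star_dotProduct_nonneg hX
    _ = ((star X.1 ∘ e) ⬝ᵥ (X.2 ∘ e)).im := by
      rw [dotProduct_comp_of_eq_zero (u := star X.1) he fun j hj => star_eq_zero.2 (hX.1 j hj)]
    _ = x ⬝ᵥ Q.map im *ᵥ x := by rw [hstar, hX.2, hXx, im_ofReal_dotProduct_mulVec]

end PhaseGraph

theorem stmt_1_general {d : ℕ} {ι : Type*} [Fintype ι] {e : ι → Fin d}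
    (he : Function.Injective e) {lam : Submodule ℂ ((Fin d → ℂ) × (Fin d → ℂ))}
    (hLag : IsLagrangian lam) (hPos : IsPositive lam)
    (hproj : {x | ∃ ξ, (x, ξ) ∈ lam} = {x | ∀ j ∉ Set.range e, x j = 0}) :
    ∃ Q : Matrix ι ι ℂ, Q.IsSymm ∧ (Q.map im).PosSemidef ∧ lam = phaseGraph e Q := by
  obtain ⟨Q, hQ, rfl⟩ := hLag.exists_isSymm_eq_phaseGraph he hproj
  exact ⟨Q, hQ, posSemidef_im_of_isPositive_phaseGraph he hQ hPos, rfl⟩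

/-- Lemma `lagrangianpure`.  Let `λ ⊆ ℂ^d × ℂ^d` be a positive Lagrangian
whose projection on the first factor equals `ℂ^k × {0}` (i.e. it consists exactly of the
vectors vanishing in coordinates `≥ k`), with `0 ≤ k ≤ d`.  If `k = 0` then
`λ = {0} × ℂ^d`; if `1 ≤ k` then there is a symmetric `Q ∈ ℂ^{k×k}` with `Im Q`
positive semidefinite such that `λ = { (x',0,Qx',ξ'') : x' ∈ ℂ^k, ξ'' ∈ ℂ^{d−k} }`. -/
theorem stmt_1 (d k : ℕ) (hk : k ≤ d)
    (lam : Submodule ℂ ((Fin d → ℂ) × (Fin d → ℂ)))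
    (hLag : IsLagrangian lam) (hPos : IsPositive lam)
    (hproj : {x : Fin d → ℂ | ∃ ξ : Fin d → ℂ, (x, ξ) ∈ lam}
      = {x : Fin d → ℂ | ∀ j : Fin d, k ≤ (j : ℕ) → x j = 0}) :
    (k = 0 → ∀ X : (Fin d → ℂ) × (Fin d → ℂ), X ∈ lam ↔ X.1 = 0) ∧
    (1 ≤ k → ∃ Q : Matrix (Fin k) (Fin k) ℂ, Q.IsSymm ∧
      (Q.map Complex.im).PosSemidef ∧
      ∀ X : (Fin d → ℂ) × (Fin d → ℂ), X ∈ lam ↔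
        ((∀ j : Fin d, k ≤ (j : ℕ) → X.1 j = 0) ∧
         ∀ j : Fin d, (h : (j : ℕ) < k) →
           X.2 j = ∑ i : Fin k, Q ⟨(j : ℕ), h⟩ i * X.1 (Fin.castLE hk i))) := by
  obtain ⟨Q, hQ, hIm, rfl⟩ := stmt_1_general (Fin.castLE_injective hk) hLag hPos
    (by simpa only [Fin.range_castLE, Set.mem_ofPred_eq, not_lt] using hproj)
  refine ⟨?_, fun _ => ⟨Q, hQ, hIm, fun X => mem_phaseGraph_castLE hk⟩⟩
  rintro rfl X
  exact mem_phaseGraph_of_isEmpty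

end Stmt1
end

section
/- Let λ ⊆ ℂ^d × ℂ^d be a positive Lagrangian subspace, let λ₁ = { x ∈ ℂ^d : (x,ξ) ∈ λ for some ξ ∈ ℂ^d } be its projection on the first factor, let k = dim_ℂ λ₁ and N = d − k. Then there exists a symmetric matrix R ∈ ℂ^{d×d} with Im R positive semidefinite such that: if k = d, then λ = { (x, 2Rx) : x ∈ ℂ^d }; and if 0 ≤ k ≤ d−1, then there exists an injective matrix L ∈ ℝ^{d×N} with L^t R = 0 (i.e. the range of the map x ↦ 2Rx is orthogonal to the range of L, meaning the real and imaginary parts of every vector in the range of R are orthogonal in ℝ^d to the range of L) such that λ = { (x, 2Rx + Lθ) : x ∈ ℂ^d, θ ∈ ℂ^N, L^t x = 0 }. -/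
open Matrix Complex

namespace Stmt2

/-- Bilinear (non-sesquilinear) pairing `⟨u,v⟩ = Σ_j u_j v_j` on `ℂ^d`. -/
noncomputable def pairC {d : ℕ} (u v : Fin d → ℂ) : ℂ := ∑ j, u j * v j

/-- Canonical symplectic form `σ((x,ξ),(x',ξ')) = ⟨x',ξ⟩ − ⟨x,ξ'⟩` on `ℂ^d × ℂ^d`. -/
noncomputable def sform {d : ℕ} (X Y : (Fin d → ℂ) × (Fin d → ℂ)) : ℂ :=
  pairC Y.1 X.2 - pairC X.1 Y.2

/-- A complex subspace `λ ⊆ ℂ^d × ℂ^d` is Lagrangian if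
`λ = { X : σ(X,Y) = 0 for all Y ∈ λ }`. -/
def IsLagrangian {d : ℕ} (lam : Submodule ℂ ((Fin d → ℂ) × (Fin d → ℂ))) : Prop :=
  ∀ X, X ∈ lam ↔ ∀ Y ∈ lam, sform X Y = 0

/-- A Lagrangian is positive if `i σ(X̄, X)` is a nonnegative real number for all `X ∈ λ`. -/
def IsPositive {d : ℕ} (lam : Submodule ℂ ((Fin d → ℂ) × (Fin d → ℂ))) : Prop :=
  ∀ X ∈ lam, ∃ r : ℝ, 0 ≤ r ∧
    Complex.I * sform (fun j => starRingEnd ℂ (X.1 j), fun j => starRingEnd ℂ (X.2 j)) X = r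

/-!
Let `W = { η : (0, η) ∈ λ }` be the vertical part of `λ`. The Lagrangian condition makes `W` and
`λ₁` orthogonal complements of each other for the bilinear dot product. If `(x, ξ) ∈ λ` and
`η ∈ W`, then positivity gives `Im ⟨x̄, ξ + cη⟩ ≥ 0` for all `c ∈ ℂ`, which forces `⟨x̄, η⟩ = 0`.
Hence `W` is stable under complex conjugation, so it is the complexification of a real subspace;
the columns of `L` are an orthonormal basis of the latter. The real matrix `P = 1 - L Lᵀ` is then
a projection onto `λ₁`. Lifting `P` linearly to `λ` and subtracting the vertical component of the
lift gives `T` with `(Px, Tx) ∈ λ` and `Lᵀ T = 0`. Since `⟨y, Tx⟩ = ⟨Py, Tx⟩`, the symmetry of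
`T` and the positivity of `Im T` are read off from `λ`, and `R = T / 2`.
-/

section DotProduct

variable {ι κ R : Type*} [Fintype ι] [CommRing R]

lemma dotProductBilin_isRefl : (dotProductBilin R R : LinearMap.BilinForm R (ι → R)).IsRefl :=
  fun x y h => (dotProduct_comm y x).trans h

lemma dotProductBilin_nondegenerate :
    (dotProductBilin R R : LinearMap.BilinForm R (ι → R)).Nondegenerate :=
  dotProductBilin_isRefl.nondegenerate_iff_separatingLeft.2 dotProduct_eq_zero

lemma mem_orthogonal_range_mulVecLin_iff [Fintype κ] {M : Matrix ι κ R} {x : ι → R} :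
    x ∈ LinearMap.BilinForm.orthogonal (dotProductBilin R R) M.mulVecLin.range ↔
      Mᵀ *ᵥ x = 0 := by
  rw [← dotProduct_eq_zero_iff, LinearMap.BilinForm.mem_orthogonal_iff]
  simp [mulVec_transpose, ← dotProduct_mulVec, dotProduct_comm x]

lemma isSymm_of_dotProduct_mulVec_comm {M : Matrix ι ι R}
    (hM : ∀ x y, x ⬝ᵥ M *ᵥ y = y ⬝ᵥ M *ᵥ x) : M.IsSymm := by
  classical
  exact IsSymm.ext fun i j => by simpa using hM (Pi.single j 1) (Pi.single i 1)

end DotProduct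

lemma mulVec_injective_of_mul_eq_one {ι κ R : Type*} [Fintype ι] [Fintype κ] [DecidableEq κ]
    [Semiring R] {A : Matrix κ ι R} {B : Matrix ι κ R} (hAB : A * B = 1) :
    Function.Injective B.mulVec :=
  Function.LeftInverse.injective (g := A.mulVec) fun x => by rw [mulVec_mulVec, hAB, one_mulVec]

lemma transpose_map_mul_map_eq_one {ι κ R S : Type*} [Fintype ι] [DecidableEq κ]
    [Semiring R] [Semiring S] (f : R →+* S) {L : Matrix ι κ R} (hL : Lᵀ * L = 1) :
    (L.map f)ᵀ * L.map f = 1 := by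
  rw [← transpose_map, ← Matrix.map_mul, hL, Matrix.map_one _ f.map_zero f.map_one]

section KerProj

variable {ι κ R : Type*} [DecidableEq ι] [Fintype κ] [CommRing R]

/-- The matrix `1 - L Lᵀ`. When the columns of `L` are orthonormal for the bilinear dot product,
it is the orthogonal projection onto the kernel of `Lᵀ`. -/
def kerProj (L : Matrix ι κ R) : Matrix ι ι R := 1 - L * Lᵀ

lemma kerProj_map {S : Type*} [CommRing S] (f : R →+* S) (L : Matrix ι κ R) :
    kerProj (L.map f) = (kerProj L).map f := by
  ext i j
  simp [kerProj, mul_apply, one_apply, apply_ite f]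

variable [Fintype ι]

lemma kerProj_mulVec (L : Matrix ι κ R) (x : ι → R) :
    kerProj L *ᵥ x = x - L *ᵥ (Lᵀ *ᵥ x) := by
  rw [kerProj, sub_mulVec, one_mulVec, mulVec_mulVec]

lemma kerProj_mulVec_eq_self {L : Matrix ι κ R} {x : ι → R} (hx : Lᵀ *ᵥ x = 0) :
    kerProj L *ᵥ x = x := by
  rw [kerProj_mulVec, hx, mulVec_zero, sub_zero]

lemma transpose_mul_kerProj [DecidableEq κ] {L : Matrix ι κ R} (hL : Lᵀ * L = 1) :
    Lᵀ * kerProj L = 0 := by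
  rw [kerProj, Matrix.mul_sub, ← Matrix.mul_assoc, hL, Matrix.one_mul, Matrix.mul_one, sub_self]

lemma kerProj_mulVec_dotProduct (L : Matrix ι κ R) (x y : ι → R) :
    kerProj L *ᵥ x ⬝ᵥ y = x ⬝ᵥ kerProj L *ᵥ y := by
  have hsymm : (kerProj L)ᵀ = kerProj L := by simp [kerProj]
  rw [dotProduct_mulVec, ← mulVec_transpose, hsymm]

lemma kerProj_mulVec_dotProduct_mulVec {ν : Type*} [Fintype ν] {L : Matrix ι κ R}
    {T : Matrix ι ν R} (hLT : Lᵀ * T = 0) (y : ι → R) (x : ν → R) :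
    kerProj L *ᵥ y ⬝ᵥ T *ᵥ x = y ⬝ᵥ T *ᵥ x := by
  rw [kerProj_mulVec_dotProduct, kerProj_mulVec_eq_self]
  rw [mulVec_mulVec, hLT, zero_mulVec]

end KerProj

lemma exists_orthonormal_range_mulVecLin_eq {𝕜 ι : Type*} [RCLike 𝕜] [Fintype ι]
    (U : Submodule 𝕜 (ι → 𝕜)) :
    ∃ (n : ℕ) (L : Matrix ι (Fin n) 𝕜), Lᴴ * L = 1 ∧ L.mulVecLin.range = U := by
  let e := WithLp.linearEquiv 2 𝕜 (ι → 𝕜)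
  let b := stdOrthonormalBasis 𝕜 (U.comap e.toLinearMap)
  let L : Matrix ι (Fin (Module.finrank 𝕜 (U.comap e.toLinearMap))) 𝕜 := .of fun i j => e (b j) i
  refine ⟨_, L, ?_, ?_⟩
  · ext i j
    have hinner := b.inner_eq_ite i j
    rw [Submodule.coe_inner, EuclideanSpace.inner_eq_star_dotProduct, dotProduct_comm] at hinner
    rwa [one_apply]
  · have hcols : Set.range L.col = (e.toLinearMap ∘ₗ Submodule.subtype _) '' Set.range b := by
      rw [← Set.range_comp]; rfl
    rw [range_mulVecLin, hcols, ← Submodule.map_span, ← b.coe_toBasis, b.toBasis.span_eq,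
      Submodule.map_comp, Submodule.map_top, Submodule.range_subtype,
      Submodule.map_comap_eq_of_surjective e.surjective]

section Complexification

variable {ι κ : Type*}

/-- The real points `W ∩ ℝ^ι` of a complex subspace `W ⊆ ℂ^ι`, as a real subspace. -/
noncomputable def realPoints (W : Submodule ℂ (ι → ℂ)) : Submodule ℝ (ι → ℝ) :=
  (W.restrictScalars ℝ).comap (ofRealCLM.toLinearMap.compLeft ι)

lemma mem_realPoints {W : Submodule ℂ (ι → ℂ)} {u : ι → ℝ} :
    u ∈ realPoints W ↔ ofReal ∘ u ∈ W := Iff.rfl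

lemma re_comp_mem_realPoints {W : Submodule ℂ (ι → ℂ)} (hW : ∀ η ∈ W, star η ∈ W)
    {η : ι → ℂ} (hη : η ∈ W) : re ∘ η ∈ realPoints W := by
  have hre : ofReal ∘ re ∘ η = (1 / 2 : ℂ) • (η + star η) := by
    ext j
    simp [re_eq_add_conj, div_eq_inv_mul]
  rw [mem_realPoints, hre]
  exact W.smul_mem _ (W.add_mem hη (hW η hη))

lemma im_comp_mem_realPoints {W : Submodule ℂ (ι → ℂ)} (hW : ∀ η ∈ W, star η ∈ W)
    {η : ι → ℂ} (hη : η ∈ W) : im ∘ η ∈ realPoints W := by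
  have him : im ∘ η = re ∘ (-I • η) := by ext j; simp
  exact him ▸ re_comp_mem_realPoints hW (W.smul_mem _ hη)

lemma ofReal_re_add_I_smul_ofReal_im (z : ι → ℂ) :
    ofReal ∘ re ∘ z + I • ofReal ∘ im ∘ z = z := by
  ext j; simp [mul_comm I]

variable [Fintype κ]

lemma map_ofReal_mulVec_ofReal (M : Matrix ι κ ℝ) (u : κ → ℝ) :
    M.map ofReal *ᵥ (ofReal ∘ u) = ofReal ∘ (M *ᵥ u) :=
  funext fun i => (ofRealHom.map_mulVec M u i).symm

lemma range_mulVecLin_map_ofReal {W : Submodule ℂ (ι → ℂ)} (hW : ∀ η ∈ W, star η ∈ W)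
    {L : Matrix ι κ ℝ} (hL : L.mulVecLin.range = realPoints W) :
    (L.map ofReal).mulVecLin.range = W := by
  apply le_antisymm
  · rintro _ ⟨θ, rfl⟩
    have hmem (u : κ → ℝ) : L.map ofReal *ᵥ (ofReal ∘ u) ∈ W := by
      rw [map_ofReal_mulVec_ofReal, ← mem_realPoints, ← hL]
      exact ⟨u, rfl⟩
    rw [mulVecLin_apply, ← ofReal_re_add_I_smul_ofReal_im θ, mulVec_add, mulVec_smul]
    exact W.add_mem (hmem _) (W.smul_mem I (hmem _))
  · intro η hη
    obtain ⟨a, ha⟩ : re ∘ η ∈ L.mulVecLin.range := hL ▸ re_comp_mem_realPoints hW hη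
    obtain ⟨b, hb⟩ : im ∘ η ∈ L.mulVecLin.range := hL ▸ im_comp_mem_realPoints hW hη
    refine ⟨ofReal ∘ a + I • ofReal ∘ b, ?_⟩
    rw [mulVecLin_apply] at ha hb ⊢
    rw [mulVec_add, mulVec_smul, map_ofReal_mulVec_ofReal, map_ofReal_mulVec_ofReal, ha, hb,
      ofReal_re_add_I_smul_ofReal_im]

lemma exists_real_orthonormal_range_eq [Fintype ι] {W : Submodule ℂ (ι → ℂ)}
    (hW : ∀ η ∈ W, star η ∈ W) :
    ∃ L : Matrix ι (Fin (Module.finrank ℂ W)) ℝ,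
      Lᵀ * L = 1 ∧ (L.map ofReal).mulVecLin.range = W := by
  obtain ⟨n, L, hLL, hrange⟩ := exists_orthonormal_range_mulVecLin_eq (realPoints W)
  rw [conjTranspose_eq_transpose_of_trivial] at hLL
  have hrangeC := range_mulVecLin_map_ofReal hW hrange
  have hLLC : (L.map ofReal)ᵀ * L.map ofReal = 1 := transpose_map_mul_map_eq_one ofRealHom hLL
  have hinj : Function.Injective (L.map ofReal).mulVecLin := mulVec_injective_of_mul_eq_one hLLC
  obtain rfl : n = Module.finrank ℂ W := by
    rw [← hrangeC, LinearMap.finrank_range_of_inj hinj, Module.finrank_fin_fun]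
  exact ⟨L, hLL, hrangeC⟩

lemma posSemidef_map_im_of_isSymm {M : Matrix κ κ ℂ} (hM : M.IsSymm)
    (hnonneg : ∀ u : κ → ℝ, 0 ≤ (ofReal ∘ u ⬝ᵥ M *ᵥ (ofReal ∘ u)).im) :
    (M.map im).PosSemidef := by
  have hsymm : (M.map im).IsHermitian := by
    rw [IsHermitian, conjTranspose_eq_transpose_of_trivial, ← transpose_map, hM]
  refine .of_dotProduct_mulVec_nonneg hsymm fun u => ?_
  have hdot : star u ⬝ᵥ M.map im *ᵥ u = (ofReal ∘ u ⬝ᵥ M *ᵥ (ofReal ∘ u)).im := by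
    simp [dotProduct, mulVec]
  exact hdot ▸ hnonneg u

end Complexification

lemma exists_linearMap_prodMk_mem {R E M N : Type*} [Semiring R] [AddCommMonoid E] [Module R E]
    [Module.Projective R E] [AddCommMonoid M] [Module R M] [AddCommMonoid N] [Module R N]
    (S : Submodule R (M × N)) {f : E →ₗ[R] M} (hf : ∀ x, f x ∈ S.map (LinearMap.fst R M N)) :
    ∃ g : E →ₗ[R] N, ∀ x, (f x, g x) ∈ S := by
  obtain ⟨h, hh⟩ := Module.projective_lifting_property
    ((LinearMap.fst R M N).submoduleMap S) (f.codRestrict _ hf)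
    ((LinearMap.fst R M N).submoduleMap_surjective S)
  refine ⟨LinearMap.snd R M N ∘ₗ S.subtype ∘ₗ h, fun x => ?_⟩
  have hfst : (h x : M × N).1 = f x := congrArg Subtype.val (LinearMap.congr_fun hh x)
  simp [← hfst]

lemma eq_zero_of_forall_im_add_mul_nonneg {a w : ℂ} (h : ∀ c : ℂ, 0 ≤ (a + c * w).im) :
    w = 0 := by
  by_contra hw
  have him : (a + -(a.im + 1) * I).im = -1 := by simp
  have hnonneg := h (-(a.im + 1) * I / w)
  rw [div_mul_cancel₀ _ hw, him] at hnonneg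
  linarith

section Lagrangian

variable {d : ℕ} {lam : Submodule ℂ ((Fin d → ℂ) × (Fin d → ℂ))}

/-- The projection `λ₁ = { x : (x, ξ) ∈ λ for some ξ }` of `λ` on the first factor. -/
abbrev base (lam : Submodule ℂ ((Fin d → ℂ) × (Fin d → ℂ))) : Submodule ℂ (Fin d → ℂ) :=
  lam.map (LinearMap.fst ℂ (Fin d → ℂ) (Fin d → ℂ))

/-- The vertical part `{ η : (0, η) ∈ λ }` of `λ`. -/
def vertical (lam : Submodule ℂ ((Fin d → ℂ) × (Fin d → ℂ))) : Submodule ℂ (Fin d → ℂ) :=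
  lam.comap (LinearMap.inr ℂ (Fin d → ℂ) (Fin d → ℂ))

lemma mem_vertical {η : Fin d → ℂ} : η ∈ vertical lam ↔ (0, η) ∈ lam := Iff.rfl

lemma mem_iff_sub_mem_vertical {x ξ η : Fin d → ℂ} (hξ : (x, ξ) ∈ lam) :
    (x, η) ∈ lam ↔ η - ξ ∈ vertical lam := by
  rw [mem_vertical, ← lam.sub_mem_iff_left hξ, Prod.mk_sub_mk, sub_self]

lemma IsLagrangian.dotProduct_comm_of_mem (hLag : IsLagrangian lam) {x ξ y η : Fin d → ℂ}
    (hx : (x, ξ) ∈ lam) (hy : (y, η) ∈ lam) : x ⬝ᵥ η = y ⬝ᵥ ξ :=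
  (sub_eq_zero.1 ((hLag _).1 hx _ hy)).symm

lemma IsLagrangian.vertical_eq_orthogonal_base (hLag : IsLagrangian lam) :
    vertical lam = LinearMap.BilinForm.orthogonal (dotProductBilin ℂ ℂ) (base lam) := by
  ext η
  rw [mem_vertical, hLag, LinearMap.BilinForm.mem_orthogonal_iff]
  simp [sform, pairC, dotProduct]

lemma IsLagrangian.base_eq_orthogonal_vertical (hLag : IsLagrangian lam) :
    base lam = LinearMap.BilinForm.orthogonal (dotProductBilin ℂ ℂ) (vertical lam) := by
  rw [hLag.vertical_eq_orthogonal_base, LinearMap.BilinForm.orthogonal_orthogonal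
    (B := dotProductBilin ℂ ℂ) dotProductBilin_nondegenerate dotProductBilin_isRefl]

lemma IsLagrangian.finrank_vertical (hLag : IsLagrangian lam) :
    Module.finrank ℂ (vertical lam) = d - Module.finrank ℂ (base lam) := by
  rw [hLag.vertical_eq_orthogonal_base,
    LinearMap.BilinForm.finrank_orthogonal dotProductBilin_nondegenerate, Module.finrank_fin_fun]

lemma IsPositive.im_star_dotProduct_nonneg (hPos : IsPositive lam) {x ξ : Fin d → ℂ}
    (hx : (x, ξ) ∈ lam) : 0 ≤ (star x ⬝ᵥ ξ).im := by
  obtain ⟨r, hr, hform⟩ := hPos _ hx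
  have hconj : x ⬝ᵥ star ξ = star (star x ⬝ᵥ ξ) := by rw [dotProduct_star, dotProduct_comm]
  have hI : I * (star (star x ⬝ᵥ ξ) - star x ⬝ᵥ ξ) = r := hconj ▸ hform
  have hre : 2 * (star x ⬝ᵥ ξ).im = r := by
    rw [← ofReal_re r, ← hI]
    simp [two_mul]
  linarith

lemma IsPositive.star_dotProduct_eq_zero (hPos : IsPositive lam) {x η : Fin d → ℂ}
    (hx : x ∈ base lam) (hη : η ∈ vertical lam) : star x ⬝ᵥ η = 0 := by
  obtain ⟨⟨x, ξ⟩, hξ, rfl⟩ := hx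
  refine eq_zero_of_forall_im_add_mul_nonneg (a := star x ⬝ᵥ ξ) fun c => ?_
  rw [LinearMap.fst_apply]
  have hmem : (x, ξ + c • η) ∈ lam :=
    (mem_iff_sub_mem_vertical hξ).2 (by simpa using (vertical lam).smul_mem c hη)
  simpa only [dotProduct_add, dotProduct_smul, smul_eq_mul] using
    hPos.im_star_dotProduct_nonneg hmem

lemma IsLagrangian.star_mem_vertical (hLag : IsLagrangian lam) (hPos : IsPositive lam)
    {η : Fin d → ℂ} (hη : η ∈ vertical lam) : star η ∈ vertical lam := by
  rw [hLag.vertical_eq_orthogonal_base, LinearMap.BilinForm.mem_orthogonal_iff]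
  intro x hx
  rw [dotProductBilin_apply_apply, dotProduct_star, dotProduct_comm,
    hPos.star_dotProduct_eq_zero hx hη, star_zero]

section Vertical

variable {κ : Type*} [Fintype κ] {L : Matrix (Fin d) κ ℂ} {T : Matrix (Fin d) (Fin d) ℂ}

/-- `T` is a lift of the projection `kerProj L` to `λ` whose values are orthogonal to the columns
of `L`. If these columns are orthonormal and span the vertical part of `λ`, then such a `T` plays
the role of `2R` in the parametrization of `λ`. -/
structure IsHorizontalLift (lam : Submodule ℂ ((Fin d → ℂ) × (Fin d → ℂ)))
    (L : Matrix (Fin d) κ ℂ) (T : Matrix (Fin d) (Fin d) ℂ) : Prop where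
  transpose_mul_eq_zero : Lᵀ * T = 0
  prodMk_mem : ∀ x, (kerProj L *ᵥ x, T *ᵥ x) ∈ lam

lemma IsLagrangian.mem_base_iff (hLag : IsLagrangian lam) (hL : L.mulVecLin.range = vertical lam)
    {x : Fin d → ℂ} : x ∈ base lam ↔ Lᵀ *ᵥ x = 0 := by
  rw [hLag.base_eq_orthogonal_vertical, ← hL, mem_orthogonal_range_mulVecLin_iff]

lemma IsLagrangian.exists_isHorizontalLift [DecidableEq κ] (hLag : IsLagrangian lam)
    (hLL : Lᵀ * L = 1) (hL : L.mulVecLin.range = vertical lam) :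
    ∃ T, IsHorizontalLift lam L T := by
  have hbase (x : Fin d → ℂ) : (kerProj L).mulVecLin x ∈ base lam := by
    rw [hLag.mem_base_iff hL, mulVecLin_apply, mulVec_mulVec, transpose_mul_kerProj hLL,
      zero_mulVec]
  obtain ⟨g, hg⟩ := exists_linearMap_prodMk_mem lam hbase
  refine ⟨kerProj L * g.toMatrix', ?_, fun x => ?_⟩
  · rw [← Matrix.mul_assoc, transpose_mul_kerProj hLL, Matrix.zero_mul]
  · have hvert : L *ᵥ (Lᵀ *ᵥ g x) ∈ vertical lam := hL ▸ ⟨_, rfl⟩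
    rw [← mulVecLin_apply (kerProj L), mem_iff_sub_mem_vertical (hg x), ← mulVec_mulVec,
      LinearMap.toMatrix'_mulVec, kerProj_mulVec, sub_sub_cancel_left]
    exact (vertical lam).neg_mem hvert

lemma IsHorizontalLift.isSymm (hT : IsHorizontalLift lam L T) (hLag : IsLagrangian lam) :
    T.IsSymm :=
  isSymm_of_dotProduct_mulVec_comm fun x y => by
    rw [← kerProj_mulVec_dotProduct_mulVec hT.transpose_mul_eq_zero,
      hLag.dotProduct_comm_of_mem (hT.prodMk_mem x) (hT.prodMk_mem y),
      kerProj_mulVec_dotProduct_mulVec hT.transpose_mul_eq_zero]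

lemma IsHorizontalLift.mem_iff (hT : IsHorizontalLift lam L T) (hLag : IsLagrangian lam)
    (hL : L.mulVecLin.range = vertical lam) {x η : Fin d → ℂ} :
    (x, η) ∈ lam ↔ Lᵀ *ᵥ x = 0 ∧ ∃ θ, η = T *ᵥ x + L *ᵥ θ := by
  have hfiber (hx : Lᵀ *ᵥ x = 0) : (x, η) ∈ lam ↔ ∃ θ, η = T *ᵥ x + L *ᵥ θ := by
    have hTx : (x, T *ᵥ x) ∈ lam := by simpa only [kerProj_mulVec_eq_self hx] using hT.prodMk_mem x
    simp only [mem_iff_sub_mem_vertical hTx, ← hL, LinearMap.mem_range, mulVecLin_apply,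
      eq_sub_iff_add_eq', eq_comm]
  rw [← and_congr_right hfiber, ← hLag.mem_base_iff hL]
  exact (and_iff_right_of_imp fun h => ⟨_, h, rfl⟩).symm

lemma IsHorizontalLift.posSemidef_map_im {L : Matrix (Fin d) κ ℝ}
    (hT : IsHorizontalLift lam (L.map ofReal) T) (hLag : IsLagrangian lam)
    (hPos : IsPositive lam) : (T.map im).PosSemidef := by
  refine posSemidef_map_im_of_isSymm (hT.isSymm hLag) fun u => ?_
  have hreal : star (kerProj (L.map ofReal) *ᵥ (ofReal ∘ u)) =
      kerProj (L.map ofReal) *ᵥ (ofReal ∘ u) := by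
    rw [show kerProj (L.map ofReal) = (kerProj L).map ofReal from kerProj_map ofRealHom L,
      map_ofReal_mulVec_ofReal]
    ext j
    simp
  rw [← kerProj_mulVec_dotProduct_mulVec hT.transpose_mul_eq_zero, ← hreal]
  exact hPos.im_star_dotProduct_nonneg (hT.prodMk_mem _)

end Vertical

theorem IsLagrangian.exists_normal_form (hLag : IsLagrangian lam) (hPos : IsPositive lam)
    {N : ℕ} (hN : N = d - Module.finrank ℂ (base lam)) :
    ∃ (T : Matrix (Fin d) (Fin d) ℂ) (L : Matrix (Fin d) (Fin N) ℝ),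
      T.IsSymm ∧ (T.map im).PosSemidef ∧ Lᵀ * L = 1 ∧ (L.map ofReal)ᵀ * T = 0 ∧
      ∀ x η, (x, η) ∈ lam ↔
        (L.map ofReal)ᵀ *ᵥ x = 0 ∧ ∃ θ, η = T *ᵥ x + L.map ofReal *ᵥ θ := by
  rw [← hLag.finrank_vertical] at hN
  subst hN
  obtain ⟨L, hLL, hrange⟩ :=
    exists_real_orthonormal_range_eq fun _ => hLag.star_mem_vertical hPos
  obtain ⟨T, hT⟩ :=
    hLag.exists_isHorizontalLift (transpose_map_mul_map_eq_one ofRealHom hLL) hrange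
  exact ⟨T, L, hT.isSymm hLag, hT.posSemidef_map_im hLag hPos, hLL, hT.transpose_mul_eq_zero,
    fun _ _ => hT.mem_iff hLag hrange⟩

end Lagrangian

/-- Proposition: parametrization of positive Lagrangians.  Let
`λ ⊆ ℂ^d × ℂ^d` be a positive Lagrangian, `λ₁` its projection on the first factor,
`k = dim_ℂ λ₁` and `N = d − k`.  Then there is a symmetric `R ∈ ℂ^{d×d}` with `Im R`
positive semidefinite such that: if `k = d` then `λ = { (x, 2Rx) : x ∈ ℂ^d }`; and if
`k ≤ d−1` then there is an injective matrix `L ∈ ℝ^{d×N}` with `Lᵗ R = 0` such that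
`λ = { (x, 2Rx + Lθ) : x ∈ ℂ^d, θ ∈ ℂ^N, Lᵗ x = 0 }`. -/
theorem stmt_2 (d : ℕ)
    (lam : Submodule ℂ ((Fin d → ℂ) × (Fin d → ℂ)))
    (hLag : IsLagrangian lam) (hPos : IsPositive lam)
    (k : ℕ) (hk : k = Module.finrank ℂ
      (lam.map (LinearMap.fst ℂ (Fin d → ℂ) (Fin d → ℂ))))
    (N : ℕ) (hN : N = d - k) :
    ∃ R : Matrix (Fin d) (Fin d) ℂ, R.IsSymm ∧ (R.map Complex.im).PosSemidef ∧
      ((k = d → ∀ X : (Fin d → ℂ) × (Fin d → ℂ),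
          X ∈ lam ↔ X.2 = (2 : ℂ) • R.mulVec X.1) ∧
       (k ≤ d - 1 → ∃ L : Matrix (Fin d) (Fin N) ℝ,
          Function.Injective (L.mulVec : (Fin N → ℝ) → (Fin d → ℝ)) ∧
          (L.map ((↑) : ℝ → ℂ))ᵀ * R = 0 ∧
          ∀ X : (Fin d → ℂ) × (Fin d → ℂ), X ∈ lam ↔
            ((L.map ((↑) : ℝ → ℂ))ᵀ.mulVec X.1 = 0 ∧
             ∃ θ : Fin N → ℂ,
               X.2 = (2 : ℂ) • R.mulVec X.1 + (L.map ((↑) : ℝ → ℂ)).mulVec θ))) := by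
  obtain ⟨T, L, hsymm, him, hLL, hLT, hmem⟩ := hLag.exists_normal_form hPos (hk ▸ hN)
  have htwo (x : Fin d → ℂ) : (2 : ℂ) • ((1 / 2 : ℂ) • T) *ᵥ x = T *ᵥ x := by
    rw [smul_mulVec, smul_smul]
    norm_num
  have him_half : ((1 / 2 : ℂ) • T).map im = (1 / 2 : ℝ) • T.map im := by
    ext i j
    simp
  refine ⟨(1 / 2 : ℂ) • T, hsymm.smul _, him_half ▸ him.smul (by norm_num), fun hkd X => ?_,
    fun _ => ⟨L, mulVec_injective_of_mul_eq_one hLL, ?_, fun X => htwo X.1 ▸ hmem X.1 X.2⟩⟩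
  · obtain rfl : N = 0 := by omega
    rw [hmem X.1 X.2, htwo]
    simp [mulVec_eq_sum]
  · rw [Matrix.mul_smul, hLT, smul_zero]

end Stmt2
end

section
/- Let Q ∈ ℂ^{2d×2d} be symmetric with Re Q positive semidefinite, and set F = J Q. Then for every t ≥ 0 and every X ∈ ℂ^{2d}, the number i·( σ( conj(exp(−2itF) X), exp(−2itF) X ) − σ( X̄, X ) ) is real and nonnegative, where X̄ and conj(·) denote entrywise complex conjugation; equivalently, the graph { (exp(−2itF) X, X) : X ∈ ℂ^{2d} } is a positive Lagrangian in ℂ^{2d} × ℂ^{2d} with respect to the form σ₁((X,Y),(X',Y')) = σ(X,X') − σ(Y,Y'). -/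
open Matrix Complex

namespace Stmt5

/-- The standard symplectic matrix `J = [[0, I],[−I, 0]]` on `ℂ^{2d} = ℂ^d ⊕ ℂ^d`. -/
noncomputable def J (d : ℕ) : Matrix (Fin d ⊕ Fin d) (Fin d ⊕ Fin d) ℂ :=
  Matrix.fromBlocks 0 1 (-1) 0

/-- Bilinear (non-sesquilinear) pairing `⟨u,v⟩ = Σ_j u_j v_j` on `ℂ^{2d}`. -/
noncomputable def pairC {d : ℕ} (u v : Fin d ⊕ Fin d → ℂ) : ℂ := ∑ j, u j * v j

/-- Canonical symplectic form `σ(X,Y) = ⟨J X, Y⟩` on `ℂ^{2d}`. -/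
noncomputable def sform {d : ℕ} (X Y : Fin d ⊕ Fin d → ℂ) : ℂ :=
  pairC ((J d).mulVec X) Y

/-- Entrywise complex conjugation of a vector. -/
noncomputable def conjV {d : ℕ} (X : Fin d ⊕ Fin d → ℂ) : Fin d ⊕ Fin d → ℂ :=
  fun j => starRingEnd ℂ (X j)

/-!
Let `K = -iJ`, so that `i σ(X̄, X) = X* K X`, and let `A = -2i J Q`. Since `J² = -1`, the Lyapunov
expression `A* K + K A` equals `2 (Q + Q*)`, which is positive semidefinite; for symmetric `Q` it is
`4 Re Q`. The derivative of `s ↦ exp(sA)* K exp(sA)` is `exp(sA)* (A* K + K A) exp(sA) ≥ 0`, so this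
curve increases from `K` in the Loewner order, and evaluating the increment at `X` gives the claim.
-/

section NormedStarAlgebra

open NormedSpace MeasureTheory

variable {E : Type*} [NormedAddCommGroup E] [NormedSpace ℝ E] [CompleteSpace E]
  [PartialOrder E] [IsOrderedAddMonoid E] [IsOrderedModule ℝ E] [ClosedIciTopology E]

theorem monotone_of_hasDerivAt_nonneg_of_continuous {f f' : ℝ → E}
    (hf : ∀ s, HasDerivAt f (f' s) s) (hcont : Continuous f') (hnonneg : 0 ≤ f') :
    Monotone f := by
  intro a b hab
  have hftc : ∫ s in a..b, f' s = f b - f a :=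
    intervalIntegral.integral_eq_sub_of_hasDerivAt (fun s _ => hf s)
      (hcont.intervalIntegrable a b)
  rw [← sub_nonneg, ← hftc, intervalIntegral.integral_of_le hab]
  exact integral_nonneg hnonneg

variable {A : Type*} [NormedRing A] [NormedAlgebra ℝ A] [CompleteSpace A]
  [StarRing A] [ContinuousStar A] [StarModule ℝ A]

theorem hasDerivAt_star_exp_mul_mul_exp (a k : A) (s : ℝ) :
    HasDerivAt (fun s : ℝ => star (exp (s • a)) * k * exp (s • a))
      (star (exp (s • a)) * (star a * k + k * a) * exp (s • a)) s := by
  simp only [star_exp, star_smul, star_trivial]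
  have hprod := ((hasDerivAt_exp_smul_const (𝕂 := ℝ) (star a) s).mul_const k).mul
    (hasDerivAt_exp_smul_const' (𝕂 := ℝ) a s)
  exact hprod.congr_deriv (by noncomm_ring)

theorem monotone_star_exp_mul_mul_exp [PartialOrder A] [StarOrderedRing A]
    [IsOrderedModule ℝ A] [ClosedIciTopology A] {a k : A} (h : 0 ≤ star a * k + k * a) :
    Monotone fun s : ℝ => star (exp (s • a)) * k * exp (s • a) := by
  have hcont : Continuous fun s : ℝ =>
      star (exp (s • a)) * (star a * k + k * a) * exp (s • a) :=
    continuous_iff_continuousAt.mpr fun s =>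
      (hasDerivAt_star_exp_mul_mul_exp a _ s).continuousAt
  exact monotone_of_hasDerivAt_nonneg_of_continuous (hasDerivAt_star_exp_mul_mul_exp a k) hcont
    fun s => star_left_conjugate_nonneg h (exp (s • a))

end NormedStarAlgebra

section PosSemidef

open scoped ComplexOrder MatrixOrder

variable {n 𝕜 : Type*} [RCLike 𝕜]

theorem add_conjTranspose_eq_two_smul_re {Q : Matrix n n 𝕜} (hQ : Q.IsSymm) :
    Q + Qᴴ = (2 : ℝ) • (Q.map RCLike.re).map (RCLike.ofReal : ℝ → 𝕜) := by
  ext i j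
  simp [hQ.apply i j, RCLike.add_conj, RCLike.real_smul_eq_coe_mul, RCLike.ofReal_ofNat]

theorem posSemidef_map_ofReal [Finite n] {M : Matrix n n ℝ} (hM : M.PosSemidef) :
    (M.map (RCLike.ofReal : ℝ → 𝕜)).PosSemidef := by
  classical
  cases nonempty_fintype n
  obtain ⟨B, rfl⟩ := CStarAlgebra.nonneg_iff_eq_star_mul_self.mp hM.nonneg
  have hmap : (star B * B).map (RCLike.ofReal : ℝ → 𝕜) =
      (B.map (RCLike.ofReal : ℝ → 𝕜))ᴴ * B.map (RCLike.ofReal : ℝ → 𝕜) := by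
    ext i j
    simp [Matrix.mul_apply]
  rw [hmap]
  exact Matrix.posSemidef_conjTranspose_mul_self _

theorem posSemidef_add_conjTranspose [Finite n] {Q : Matrix n n 𝕜} (hQ : Q.IsSymm)
    (hReQ : (Q.map RCLike.re).PosSemidef) : (Q + Qᴴ).PosSemidef := by
  rw [add_conjTranspose_eq_two_smul_re hQ]
  exact (posSemidef_map_ofReal hReQ).smul zero_le_two

open scoped Matrix.Norms.L2Operator in
theorem posSemidef_conjTranspose_exp_mul_mul_exp_sub [Fintype n] [DecidableEq n]
    {A K : Matrix n n ℂ} (h : (Aᴴ * K + K * A).PosSemidef) {t : ℝ} (ht : 0 ≤ t) :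
    ((NormedSpace.exp (t • A))ᴴ * K * NormedSpace.exp (t • A) - K).PosSemidef := by
  have hmono := monotone_star_exp_mul_mul_exp h.nonneg ht
  simp only [zero_smul, NormedSpace.exp_zero, star_one, one_mul, mul_one] at hmono
  exact hmono

end PosSemidef

section SymplecticForm

variable {d : ℕ} {Q : Matrix (Fin d ⊕ Fin d) (Fin d ⊕ Fin d) ℂ}

theorem J_eq_neg : J d = -Matrix.J (Fin d) ℂ := by
  simp [J, Matrix.J, Matrix.fromBlocks_neg]

theorem J_transpose : (J d)ᵀ = -J d := by
  simp [J_eq_neg]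

theorem J_conjTranspose : (J d)ᴴ = -J d := by
  simp [J, Matrix.fromBlocks_conjTranspose, Matrix.fromBlocks_neg]

theorem J_mul_J : J d * J d = -1 := by
  simp [J_eq_neg, Matrix.J_squared]

/-- The matrix `-iJ` of the Hermitian form `(X, Y) ↦ i σ(X̄, Y)`, whose growth along the flow is to
be shown. -/
noncomputable def sformGram (d : ℕ) : Matrix (Fin d ⊕ Fin d) (Fin d ⊕ Fin d) ℂ :=
  (-Complex.I) • J d

theorem I_mul_sform_conjV (X Y : Fin d ⊕ Fin d → ℂ) :
    Complex.I * sform (conjV X) Y = star X ⬝ᵥ sformGram d *ᵥ Y := by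
  have hswap : sform (conjV X) Y = star X ⬝ᵥ (-J d) *ᵥ Y := by
    rw [Matrix.dotProduct_mulVec, ← J_transpose, Matrix.vecMul_transpose]
    rfl
  simp [hswap, sformGram, Matrix.smul_mulVec, Matrix.neg_mulVec]

theorem I_mul_sform_conjV_mulVec (E : Matrix (Fin d ⊕ Fin d) (Fin d ⊕ Fin d) ℂ)
    (X Y : Fin d ⊕ Fin d → ℂ) :
    Complex.I * sform (conjV (E *ᵥ X)) (E *ᵥ Y) =
      star X ⬝ᵥ (Eᴴ * sformGram d * E) *ᵥ Y := by
  rw [I_mul_sform_conjV, Matrix.star_mulVec, ← Matrix.dotProduct_mulVec, Matrix.mulVec_mulVec,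
    Matrix.mulVec_mulVec, Matrix.mul_assoc]

theorem sformGram_isHermitian : (sformGram d).IsHermitian := by
  simp [Matrix.IsHermitian, sformGram, J_conjTranspose]

theorem sformGram_mul_smul_J_mul :
    sformGram d * (-(2 * Complex.I)) • (J d * Q) = (2 : ℝ) • Q := by
  have hscalar : -Complex.I * -(2 * Complex.I) = -2 := by
    linear_combination 2 * Complex.I_mul_I
  calc sformGram d * (-(2 * Complex.I)) • (J d * Q)
      = (-Complex.I * -(2 * Complex.I)) • (J d * J d * Q) := by
        rw [sformGram, Matrix.smul_mul, Matrix.mul_smul, smul_smul, Matrix.mul_assoc]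
    _ = (2 : ℂ) • Q := by simp [hscalar, J_mul_J]
    _ = (2 : ℝ) • Q := by rw [← Complex.coe_smul, Complex.ofReal_ofNat]

open scoped ComplexOrder in
theorem posSemidef_conjTranspose_mul_sformGram_add (hQ : (Q + Qᴴ).PosSemidef) :
    (((-(2 * Complex.I)) • (J d * Q))ᴴ * sformGram d +
      sformGram d * (-(2 * Complex.I)) • (J d * Q)).PosSemidef := by
  have hadjoint : ((-(2 * Complex.I)) • (J d * Q))ᴴ * sformGram d = (2 : ℝ) • Qᴴ := by
    rw [← sformGram_isHermitian.eq, ← Matrix.conjTranspose_mul, sformGram_mul_smul_J_mul,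
      Matrix.conjTranspose_smul, star_trivial]
  rw [hadjoint, sformGram_mul_smul_J_mul, ← smul_add, add_comm]
  exact hQ.smul zero_le_two

end SymplecticForm

open scoped ComplexOrder in
theorem stmt_5_general (d : ℕ) (Q : Matrix (Fin d ⊕ Fin d) (Fin d ⊕ Fin d) ℂ)
    (hQ : (Q + Qᴴ).PosSemidef) :
    ∀ t : ℝ, 0 ≤ t → ∀ X : Fin d ⊕ Fin d → ℂ,
      ∃ r : ℝ, 0 ≤ r ∧
        Complex.I *
          (sform (conjV ((NormedSpace.exp ((-(2 * Complex.I * t)) • (J d * Q))).mulVec X))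
                 ((NormedSpace.exp ((-(2 * Complex.I * t)) • (J d * Q))).mulVec X)
            - sform (conjV X) X) = r := by
  intro t ht X
  have htime : (-(2 * Complex.I * t)) • (J d * Q) = t • (-(2 * Complex.I)) • (J d * Q) := by
    rw [← Complex.coe_smul, smul_smul]
    congr 1
    ring
  have hpos := posSemidef_conjTranspose_exp_mul_mul_exp_sub
    (posSemidef_conjTranspose_mul_sformGram_add hQ) ht
  obtain ⟨r, hr, hrX⟩ :=
    RCLike.nonneg_iff_exists_ofReal.mp (hpos.dotProduct_mulVec_nonneg X)
  refine ⟨r, hr, ?_⟩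
  rw [htime, mul_sub, I_mul_sform_conjV_mulVec, I_mul_sform_conjV, ← dotProduct_sub,
    ← Matrix.sub_mulVec]
  exact hrX.symm

/-- Lemma: positivity of the graph of `exp(−2itF)`.  Let `Q ∈ ℂ^{2d×2d}`
be symmetric with `Re Q` positive semidefinite and `F = J Q`.  Then for every `t ≥ 0` and
every `X ∈ ℂ^{2d}`, the number
`i·(σ(conj(exp(−2itF)X), exp(−2itF)X) − σ(X̄,X))` is a nonnegative real number;
i.e. the graph of `exp(−2itF)` is a positive Lagrangian with respect to `σ₁`. -/
theorem stmt_5 (d : ℕ) (Q : Matrix (Fin d ⊕ Fin d) (Fin d ⊕ Fin d) ℂ)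
    (hQ : Q.IsSymm) (hReQ : (Q.map Complex.re).PosSemidef) :
    ∀ t : ℝ, 0 ≤ t → ∀ X : Fin d ⊕ Fin d → ℂ,
      ∃ r : ℝ, 0 ≤ r ∧
        Complex.I *
          (sform (conjV ((NormedSpace.exp ((-(2 * Complex.I * t)) • (J d * Q))).mulVec X))
                 ((NormedSpace.exp ((-(2 * Complex.I * t)) • (J d * Q))).mulVec X)
            - sform (conjV X) X) = r :=
  stmt_5_general d Q (posSemidef_add_conjTranspose hQ hReQ)

end Stmt5
end

section
/- Let Q ∈ ℂ^{2d×2d} be symmetric and F = J Q. Then for every integer m ≥ 1, { X ∈ ℝ^{2d} : Im((iF)^k)·X = 0 for all 1 ≤ k ≤ m } = { X ∈ ℝ^{2d} : Re F · (Im F)^k · X = 0 for all 0 ≤ k ≤ m−1 }, where Im((iF)^k) denotes the entrywise imaginary part of the matrix (iF)^k. -/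
open Matrix Complex

namespace Stmt7

/-- The standard symplectic matrix `J = [[0, I],[−I, 0]]` on `ℂ^{2d} = ℂ^d ⊕ ℂ^d`. -/
noncomputable def J (d : ℕ) : Matrix (Fin d ⊕ Fin d) (Fin d ⊕ Fin d) ℂ :=
  Matrix.fromBlocks 0 1 (-1) 0

/-!
Write `G = iF`, so that `Re G = -Im F` and `Im G = Re F`. Since
`Im (G ^ k * G) = Re (G ^ k) * Im G + Im (G ^ k) * Re G`, on the kernel of `Im G` the matrix
`Im (G ^ (k + 1))` acts as `Im (G ^ k) * Re G`. Hence both families of equations at level `m + 1`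
say that `Im G` kills `X` and that `Re G X` satisfies the family at level `m`; induct on `m` with
`X` arbitrary. Replacing `Re G` by `Im F` changes each equation only by a sign.
-/

section Rectangular

variable {l m n : Type*}

lemma map_re_I_smul (M : Matrix m n ℂ) : (I • M).map re = -M.map im := by
  ext
  simp

lemma map_im_I_smul (M : Matrix m n ℂ) : (I • M).map im = M.map re := by
  ext
  simp

lemma map_im_mul [Fintype m] (M : Matrix l m ℂ) (N : Matrix m n ℂ) :
    (M * N).map im = M.map re * N.map im + M.map im * N.map re := by
  ext
  simp [mul_apply, Finset.sum_add_distrib]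

end Rectangular

section Square

variable {n : Type*} [Fintype n] [DecidableEq n]

lemma mul_neg_pow_mulVec_eq_zero_iff {l R : Type*} [Ring R] (A : Matrix l n R)
    (B : Matrix n n R) (k : ℕ) (x : n → R) :
    (A * (-B) ^ k) *ᵥ x = 0 ↔ (A * B ^ k) *ᵥ x = 0 := by
  rcases k.even_or_odd with hk | hk
  · rw [hk.neg_pow]
  · rw [hk.neg_pow, Matrix.mul_neg, neg_mulVec, neg_eq_zero]

lemma map_im_pow_succ_mulVec_of_map_im_mulVec_eq_zero {G : Matrix n n ℂ} {X : n → ℝ}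
    (hX : G.map im *ᵥ X = 0) (k : ℕ) :
    (G ^ (k + 1)).map im *ᵥ X = (G ^ k).map im *ᵥ (G.map re *ᵥ X) := by
  rw [pow_succ, map_im_mul, add_mulVec, ← mulVec_mulVec, ← mulVec_mulVec, hX, mulVec_zero,
    zero_add]

theorem forall_map_im_pow_succ_mulVec_eq_zero_iff (G : Matrix n n ℂ) (m : ℕ) (X : n → ℝ) :
    (∀ k < m, (G ^ (k + 1)).map im *ᵥ X = 0) ↔
      ∀ k < m, (G.map im * G.map re ^ k) *ᵥ X = 0 := by
  induction m generalizing X with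
  | zero => simp only [Nat.not_lt_zero, false_imp_iff, implies_true]
  | succ m ih =>
    simp only [Nat.forall_lt_succ_left, zero_add, pow_one, pow_zero, mul_one]
    refine and_congr_right fun hX => ?_
    calc (∀ k < m, (G ^ (k + 1 + 1)).map im *ᵥ X = 0)
      _ ↔ ∀ k < m, (G ^ (k + 1)).map im *ᵥ (G.map re *ᵥ X) = 0 := by
        simp only [map_im_pow_succ_mulVec_of_map_im_mulVec_eq_zero hX]
      _ ↔ ∀ k < m, (G.map im * G.map re ^ k) *ᵥ (G.map re *ᵥ X) = 0 := ih _
      _ ↔ ∀ k < m, (G.map im * G.map re ^ (k + 1)) *ᵥ X = 0 := by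
        simp only [mulVec_mulVec, pow_succ, Matrix.mul_assoc]

theorem stmt_7_general (F : Matrix n n ℂ) (m : ℕ) :
    {X : n → ℝ | ∀ k : ℕ, 1 ≤ k → k ≤ m → ((I • F) ^ k).map im *ᵥ X = 0} =
      {X : n → ℝ | ∀ k < m, (F.map re * F.map im ^ k) *ᵥ X = 0} := by
  ext X
  calc (∀ k : ℕ, 1 ≤ k → k ≤ m → ((I • F) ^ k).map im *ᵥ X = 0)
    _ ↔ ∀ k < m, ((I • F) ^ (k + 1)).map im *ᵥ X = 0 :=
      ⟨fun h k hk => h (k + 1) k.succ_pos hk, fun h k hk hkm => by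
        simpa only [Nat.sub_add_cancel hk] using h (k - 1) (by lia)⟩
    _ ↔ ∀ k < m, (F.map re * (-F.map im) ^ k) *ᵥ X = 0 := by
      rw [forall_map_im_pow_succ_mulVec_eq_zero_iff, map_re_I_smul, map_im_I_smul]
    _ ↔ ∀ k < m, (F.map re * F.map im ^ k) *ᵥ X = 0 := by
      simp only [mul_neg_pow_mulVec_eq_zero_iff]

end Square

/-- Let `Q ∈ ℂ^{2d×2d}` be symmetric and `F = J Q`.  Then for every
integer `m ≥ 1`,
`{ X ∈ ℝ^{2d} : Im((iF)^k) X = 0 for 1 ≤ k ≤ m }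
  = { X ∈ ℝ^{2d} : Re F (Im F)^k X = 0 for 0 ≤ k ≤ m−1 }`. -/
theorem stmt_7 (d : ℕ) (Q : Matrix (Fin d ⊕ Fin d) (Fin d ⊕ Fin d) ℂ) (hQ : Q.IsSymm) :
    ∀ m : ℕ, 1 ≤ m →
      {X : Fin d ⊕ Fin d → ℝ | ∀ k : ℕ, 1 ≤ k → k ≤ m →
          (((Complex.I • (J d * Q)) ^ k).map Complex.im).mulVec X = 0}
        = {X : Fin d ⊕ Fin d → ℝ | ∀ k : ℕ, k ≤ m - 1 →
          (((J d * Q).map Complex.re) * ((J d * Q).map Complex.im) ^ k).mulVec X = 0} := by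
  intro m hm
  simpa only [Nat.le_sub_one_iff_lt hm] using stmt_7_general (J d * Q) m

end Stmt7
end

section
/- Let Q ∈ ℂ^{2d×2d} be symmetric, F = J Q, and let S = { X ∈ ℝ^{2d} : Re F · (Im F)^j · X = 0 for all 0 ≤ j ≤ 2d−1 } be the singular space of Q. Then for every t > 0, S = { X ∈ ℝ^{2d} : Im( exp(2 i s F) )·X = 0 for all s ∈ [0, t] }, where Im(exp(2isF)) denotes the entrywise imaginary part of the matrix exponential exp(2isF). -/
open Matrix Complex

namespace Stmt8

/-- The standard symplectic matrix `J = [[0, I],[−I, 0]]` on `ℂ^{2d} = ℂ^d ⊕ ℂ^d`. -/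
noncomputable def J (d : ℕ) : Matrix (Fin d ⊕ Fin d) (Fin d ⊕ Fin d) ℂ :=
  Matrix.fromBlocks 0 1 (-1) 0

/-- The singular space of a symmetric `Q ∈ ℂ^{2d×2d}` with Hamilton map `F = J Q`:
`S = { X ∈ ℝ^{2d} : Re F (Im F)^j X = 0 for 0 ≤ j ≤ 2d−1 }`. -/
def singularSpace (d : ℕ) (Q : Matrix (Fin d ⊕ Fin d) (Fin d ⊕ Fin d) ℂ) :
    Set (Fin d ⊕ Fin d → ℝ) :=
  {X | ∀ j : ℕ, j ≤ 2 * d - 1 →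
    (((J d * Q).map Complex.re) * ((J d * Q).map Complex.im) ^ j).mulVec X = 0}

/-!
For a real vector `v` and a complex matrix `N = P + iR`, the identity
`Im (N ^ (k + 1)) v = Re (N ^ k) (R v) + Im (N ^ k) (P v)` shows, by letting `v` run through its
`P`-orbit, that all powers of `N` send `v` to real vectors iff `R P ^ j v = 0` for all `j`. For
`N = 2iF` one has `P = -2 Im F` and `R = 2 Re F`, and by Cayley–Hamilton the powers `j` below the
dimension suffice. Finally `Im (N ^ k) v` are, up to factorials, the Taylor coefficients at `0` of
the real analytic function `s ↦ Im (exp (s N)) v`, so they all vanish as soon as this function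
vanishes on a set with an accumulation point.
-/

open Filter

section AnalyticFlow

variable {𝕜 A E : Type*} [RCLike 𝕜] [NormedRing A] [NormedAlgebra 𝕜 A] [CompleteSpace A]
  [NormedAddCommGroup E] [NormedSpace 𝕜 E]

theorem map_exp_smul_eq_zero_of_map_pow_eq_zero {L : A →L[𝕜] E} {a : A}
    (h : ∀ k : ℕ, L (a ^ k) = 0) (s : 𝕜) : L (NormedSpace.exp (s • a)) = 0 := by
  have hsum := (NormedSpace.exp_series_hasSum_exp' (𝕂 := 𝕜) (s • a)).mapL L
  simp only [smul_pow, map_smul, h, smul_zero] at hsum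
  exact hsum.unique hasSum_zero

theorem map_pow_eq_zero_of_map_exp_smul_eq_zero {L : A →L[𝕜] E} {a : A}
    (h : ∀ s : 𝕜, L (NormedSpace.exp (s • a)) = 0) (k : ℕ) : L (a ^ k) = 0 := by
  induction k generalizing L with
  | zero => simpa using h 0
  | succ k ih =>
    have map_deriv_eq_zero (s : 𝕜) : L (a * NormedSpace.exp (s • a)) = 0 := by
      have hderiv := L.hasFDerivAt.comp_hasDerivAt s (hasDerivAt_exp_smul_const' a s)
      exact hderiv.unique ((hasDerivAt_const s (0 : E)).congr_of_eventuallyEq (.of_forall h))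
    simpa only [pow_succ', ContinuousLinearMap.comp_apply, ContinuousLinearMap.mul_apply'] using
      ih (L := L.comp (ContinuousLinearMap.mul 𝕜 A a)) map_deriv_eq_zero

theorem map_exp_smul_eq_zero_of_accPt {L : A →L[𝕜] E} {a : A} {U : Set 𝕜} {s₀ : 𝕜}
    (hU : AccPt s₀ (𝓟 U)) (h : ∀ s ∈ U, L (NormedSpace.exp (s • a)) = 0) (s : 𝕜) :
    L (NormedSpace.exp (s • a)) = 0 := by
  have analytic : AnalyticOnNhd 𝕜 (fun s : 𝕜 => L (NormedSpace.exp (s • a))) Set.univ :=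
    fun s _ => (L.analyticAt _).comp <|
      (NormedSpace.exp_analytic (𝕂 := 𝕜) _).fun_comp (analyticAt_id.smul analyticAt_const)
  exact analytic.eqOn_zero_of_preconnected_of_frequently_eq_zero isPreconnected_univ
    (Set.mem_univ s₀) ((accPt_iff_frequently_nhdsNE.1 hU).mono h) (Set.mem_univ s)

theorem forall_map_exp_smul_eq_zero_iff {L : A →L[𝕜] E} {a : A} {U : Set 𝕜} {s₀ : 𝕜}
    (hU : AccPt s₀ (𝓟 U)) :
    (∀ s ∈ U, L (NormedSpace.exp (s • a)) = 0) ↔ ∀ k : ℕ, L (a ^ k) = 0 :=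
  ⟨fun h => map_pow_eq_zero_of_map_exp_smul_eq_zero (map_exp_smul_eq_zero_of_accPt hU h),
    fun h s _ => map_exp_smul_eq_zero_of_map_pow_eq_zero h s⟩

end AnalyticFlow

theorem forall_lt_natDegree_map_pow_eq_zero_iff {R A M : Type*} [CommRing R] [Ring A] [Algebra R A]
    [AddCommGroup M] [Module R M] {p : Polynomial R} (hp : p.Monic) {x : A}
    (hx : Polynomial.aeval x p = 0) (f : A →ₗ[R] M) :
    (∀ j < p.natDegree, f (x ^ j) = 0) ↔ ∀ j, f (x ^ j) = 0 := by
  classical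
  refine ⟨fun h j => ?_, fun h j _ => h j⟩
  have span_le_ker : Submodule.span R ((Finset.range p.natDegree).image (x ^ ·) : Set A) ≤ f.ker :=
    Submodule.span_le.2 (by simpa [Set.subset_def] using h)
  have pow_mem := pow_mem (Algebra.self_mem_adjoin_singleton R x) j
  rw [← Subalgebra.mem_toSubmodule, ← Submodule.span_range_natDegree_eq_adjoin hp hx] at pow_mem
  exact span_le_ker (by simpa using pow_mem)

section ImaginaryPart

variable {l m n : Type*}

theorem map_im_mul [Fintype m] (M : Matrix l m ℂ) (N : Matrix m n ℂ) :
    (M * N).map im = M.map re * N.map im + M.map im * N.map re := by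
  ext i j
  simp [Matrix.mul_apply, Finset.sum_add_distrib]

theorem map_re_two_mul_I_smul (F : Matrix m n ℂ) :
    ((2 * I) • F).map re = (-2 : ℝ) • F.map im := by
  ext i j
  simp

theorem map_im_two_mul_I_smul (F : Matrix m n ℂ) :
    ((2 * I) • F).map im = (2 : ℝ) • F.map re := by
  ext i j
  simp

theorem forall_map_im_pow_mulVec_eq_zero_iff [Fintype n] [DecidableEq n] (N : Matrix n n ℂ)
    (v : n → ℝ) :
    (∀ k : ℕ, (N ^ k).map im *ᵥ v = 0) ↔ ∀ j : ℕ, (N.map im * N.map re ^ j) *ᵥ v = 0 := by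
  have map_im_pow_succ_mulVec (k : ℕ) (w : n → ℝ) : (N ^ (k + 1)).map im *ᵥ w =
      (N ^ k).map re *ᵥ (N.map im *ᵥ w) + (N ^ k).map im *ᵥ (N.map re *ᵥ w) := by
    rw [pow_succ, map_im_mul, add_mulVec, mulVec_mulVec, mulVec_mulVec]
  have mul_pow_succ_mulVec (j : ℕ) (w : n → ℝ) : (N.map im * N.map re ^ (j + 1)) *ᵥ w =
      (N.map im * N.map re ^ j) *ᵥ (N.map re *ᵥ w) := by
    rw [pow_succ, ← mul_assoc, mulVec_mulVec]
  constructor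
  · intro h j
    have im_mulVec : N.map im *ᵥ v = 0 := by simpa using h 1
    induction j generalizing v with
    | zero => simpa using im_mulVec
    | succ j ih =>
      have h_re (k : ℕ) : (N ^ k).map im *ᵥ (N.map re *ᵥ v) = 0 := by
        simpa [im_mulVec, h (k + 1)] using (map_im_pow_succ_mulVec k v).symm
      rw [mul_pow_succ_mulVec]
      exact ih _ h_re (by simpa using h_re 1)
  · intro h k
    induction k generalizing v with
    | zero => ext i; simp [mulVec, dotProduct, one_apply, apply_ite im]
    | succ k ih =>
      have im_mulVec : N.map im *ᵥ v = 0 := by simpa using h 0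
      rw [map_im_pow_succ_mulVec, im_mulVec, mulVec_zero, zero_add]
      exact ih _ fun j => mul_pow_succ_mulVec j v ▸ h (j + 1)

theorem forall_map_im_two_mul_I_smul_pow_mulVec_eq_zero_iff [Fintype n] [DecidableEq n]
    (F : Matrix n n ℂ) (v : n → ℝ) :
    (∀ k : ℕ, (((2 * I) • F) ^ k).map im *ᵥ v = 0) ↔
      ∀ j : ℕ, (F.map re * F.map im ^ j) *ᵥ v = 0 := by
  rw [forall_map_im_pow_mulVec_eq_zero_iff]
  simp only [map_im_two_mul_I_smul, map_re_two_mul_I_smul, smul_pow, smul_mul_smul_comm,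
    smul_mulVec]
  exact forall_congr' fun j => smul_eq_zero_iff_right (by simp)

theorem forall_lt_card_mul_pow_mulVec_eq_zero_iff {R : Type*} [CommRing R]
    [Fintype n] [DecidableEq n] (A : Matrix m n R) (B : Matrix n n R) (v : n → R) :
    (∀ j < Fintype.card n, (A * B ^ j) *ᵥ v = 0) ↔ ∀ j, (A * B ^ j) *ᵥ v = 0 := by
  nontriviality R
  simpa only [charpoly_natDegree_eq_dim, LinearMap.comp_apply, LinearMap.flip_apply,
    mulVecBilin_apply, mulVecLin_apply, mulVec_mulVec] using
    forall_lt_natDegree_map_pow_eq_zero_iff B.charpoly_monic (aeval_self_charpoly B)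
      (A.mulVecLin ∘ₗ (mulVecBilin R R).flip v)

section

attribute [local instance] Matrix.linftyOpNormedRing Matrix.linftyOpNormedAlgebra

theorem forall_map_im_exp_smul_mulVec_eq_zero_iff [Fintype n] [DecidableEq n] (N : Matrix n n ℂ)
    (v : n → ℝ) {U : Set ℝ} {s₀ : ℝ} (hU : AccPt s₀ (𝓟 U)) :
    (∀ s ∈ U, (NormedSpace.exp (s • N)).map im *ᵥ v = 0) ↔
      ∀ k : ℕ, (N ^ k).map im *ᵥ v = 0 :=
  forall_map_exp_smul_eq_zero_iff hU (a := N)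
    (L := ((mulVecBilin ℝ ℝ).flip v ∘ₗ imLm.mapMatrix).toContinuousLinearMap)

end

end ImaginaryPart

theorem stmt_8_general {n : Type*} [Fintype n] [DecidableEq n] (F : Matrix n n ℂ)
    {U : Set ℝ} {s₀ : ℝ} (hU : AccPt s₀ (𝓟 U)) :
    {v : n → ℝ | ∀ j < Fintype.card n, (F.map re * F.map im ^ j) *ᵥ v = 0} =
      {v | ∀ s ∈ U, (NormedSpace.exp ((2 * I * s) • F)).map im *ᵥ v = 0} := by
  have smul_eq (s : ℝ) : (2 * I * s) • F = s • ((2 * I) • F) := by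
    rw [mul_comm, mul_smul, Complex.coe_smul]
  ext v
  simp only [Set.mem_ofPred_eq, smul_eq]
  rw [forall_lt_card_mul_pow_mulVec_eq_zero_iff,
    forall_map_im_exp_smul_mulVec_eq_zero_iff _ _ hU,
    forall_map_im_two_mul_I_smul_pow_mulVec_eq_zero_iff]

-- For `d = 0` the truncated bound `j ≤ 2 * d - 1` still admits `j = 0`, unlike `j < 2 * d`.
theorem singularSpace_eq_forall_lt_card (d : ℕ) (Q : Matrix (Fin d ⊕ Fin d) (Fin d ⊕ Fin d) ℂ) :
    singularSpace d Q = {v | ∀ j < Fintype.card (Fin d ⊕ Fin d),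
      ((J d * Q).map re * (J d * Q).map im ^ j) *ᵥ v = 0} := by
  ext v
  rcases d.eq_zero_or_pos with rfl | hd
  · exact iff_of_true (fun _ _ => Subsingleton.elim _ _) (fun _ _ => Subsingleton.elim _ _)
  · have le_iff_lt (j : ℕ) : j ≤ 2 * d - 1 ↔ j < Fintype.card (Fin d ⊕ Fin d) := by
      rw [Fintype.card_sum, Fintype.card_fin]
      lia
    simp only [singularSpace, Set.mem_ofPred_eq, le_iff_lt]

theorem accPt_Icc_left {α : Type*} [ConditionallyCompleteLinearOrder α] [DenselyOrdered α]
    [TopologicalSpace α] [OrderTopology α] {a b : α} (hab : a < b) :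
    AccPt a (𝓟 (Set.Icc a b)) :=
  isPreconnected_Icc.preperfect_of_nontrivial ⟨a, Set.left_mem_Icc.2 hab.le, b,
    Set.right_mem_Icc.2 hab.le, hab.ne⟩ a (Set.left_mem_Icc.2 hab.le)

/-- characterization of the singular space via the flow.  Let
`Q ∈ ℂ^{2d×2d}` be symmetric with Hamilton map `F = J Q` and singular space `S`.  Then for
every `t > 0`, `S = { X ∈ ℝ^{2d} : Im(exp(2isF)) X = 0 for all s ∈ [0,t] }`. -/
theorem stmt_8 (d : ℕ) (Q : Matrix (Fin d ⊕ Fin d) (Fin d ⊕ Fin d) ℂ) (hQ : Q.IsSymm) :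
    ∀ t : ℝ, 0 < t →
      singularSpace d Q
        = {X : Fin d ⊕ Fin d → ℝ | ∀ s ∈ Set.Icc (0 : ℝ) t,
            ((NormedSpace.exp ((2 * Complex.I * s) • (J d * Q))).map
                Complex.im).mulVec X = 0} := by
  intro t ht
  rw [singularSpace_eq_forall_lt_card, stmt_8_general _ (accPt_Icc_left ht)]

end Stmt8
end

section
/- Let Q ∈ ℂ^{2d×2d} be symmetric, F = J Q, and let S be the singular space of Q. Then for every X ∈ S and every t ∈ ℝ, exp(2 i t F)·X = exp(−2 t Im F)·X. -/
open Matrix Complex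

namespace Stmt9

/-- The standard symplectic matrix `J = [[0, I],[−I, 0]]` on `ℂ^{2d} = ℂ^d ⊕ ℂ^d`. -/
noncomputable def J (d : ℕ) : Matrix (Fin d ⊕ Fin d) (Fin d ⊕ Fin d) ℂ :=
  Matrix.fromBlocks 0 1 (-1) 0

/-- The singular space of a symmetric `Q ∈ ℂ^{2d×2d}` with Hamilton map `F = J Q`:
`S = { X ∈ ℝ^{2d} : Re F (Im F)^j X = 0 for 0 ≤ j ≤ 2d−1 }`. -/
def singularSpace (d : ℕ) (Q : Matrix (Fin d ⊕ Fin d) (Fin d ⊕ Fin d) ℂ) :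
    Set (Fin d ⊕ Fin d → ℝ) :=
  {X | ∀ j : ℕ, j ≤ 2 * d - 1 →
    (((J d * Q).map Complex.re) * ((J d * Q).map Complex.im) ^ j).mulVec X = 0}

/-!
Write `F = A + i B` with `A = Re F` and `B = Im F`. The conditions `A B ^ j X = 0` for `j < 2d`
propagate to all `j` by the Cayley–Hamilton theorem. Applied to a vector `B ^ k X`, the matrix `F`
then acts as `i B`, so `(2itF) ^ k X = (-2tB) ^ k X` for every `k`, and the exponential series
agree term by term on `X`.
-/

section Powers

variable {m n R : Type*} [Fintype n] [DecidableEq n]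

lemma pow_mem_span_pow_lt_card [CommRing R] (B : Matrix n n R) (k : ℕ) :
    B ^ k ∈ Submodule.span R ((B ^ ·) '' Set.Iio (Fintype.card n)) := by
  nontriviality R
  have hspan := Submodule.span_range_natDegree_eq_adjoin B.charpoly_monic B.aeval_self_charpoly
  simp only [B.charpoly_natDegree_eq_dim, Finset.coe_image, Finset.coe_range] at hspan
  rw [hspan]
  exact pow_mem (Algebra.self_mem_adjoin_singleton R B) k

lemma mul_pow_mulVec_eq_zero_of_lt_card [CommRing R] {A : Matrix m n R} {B : Matrix n n R}
    {v : n → R} (h : ∀ j < Fintype.card n, (A * B ^ j) *ᵥ v = 0) (k : ℕ) :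
    (A * B ^ k) *ᵥ v = 0 := by
  have hspan (M : Matrix n n R)
      (hM : M ∈ Submodule.span R ((B ^ ·) '' Set.Iio (Fintype.card n))) : (A * M) *ᵥ v = 0 := by
    induction hM using Submodule.span_induction with
    | mem M hM =>
      obtain ⟨j, hj, rfl⟩ := hM
      exact h j hj
    | zero => rw [Matrix.mul_zero, zero_mulVec]
    | add M N _ _ hM hN => rw [Matrix.mul_add, add_mulVec, hM, hN, add_zero]
    | smul c M _ hM => rw [Matrix.mul_smul, smul_mulVec, hM, smul_zero]
  exact hspan _ (pow_mem_span_pow_lt_card B k)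

lemma add_pow_mulVec_eq_pow_mulVec [Semiring R] {A B : Matrix n n R} {v : n → R}
    (h : ∀ j, (A * B ^ j) *ᵥ v = 0) (k : ℕ) : (A + B) ^ k *ᵥ v = B ^ k *ᵥ v := by
  induction k with
  | zero => rw [pow_zero, pow_zero]
  | succ k ih =>
    calc (A + B) ^ (k + 1) *ᵥ v = (A + B) *ᵥ (B ^ k *ᵥ v) := by
          rw [pow_succ', ← mulVec_mulVec, ih]
      _ = (A * B ^ k) *ᵥ v + B ^ (k + 1) *ᵥ v := by
          rw [add_mulVec, mulVec_mulVec, mulVec_mulVec, ← pow_succ']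
      _ = B ^ (k + 1) *ᵥ v := by rw [h, zero_add]

end Powers

section Exponential

open scoped Nat

variable {n R S : Type*} [Fintype n] [DecidableEq n]
  [NormedRing R] [NormedAlgebra ℚ R] [CompleteSpace R]

lemma hasSum_exp_matrix (M : Matrix n n R) :
    HasSum (fun k : ℕ => (k !⁻¹ : ℚ) • M ^ k) (NormedSpace.exp M) := by
  let _ : NormedRing (Matrix n n R) := Matrix.linftyOpNormedRing
  let _ : NormedAlgebra ℚ (Matrix n n R) := Matrix.linftyOpNormedAlgebra
  have : @CompleteSpace (Matrix n n R) PseudoMetricSpace.toUniformSpace :=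
    inferInstanceAs (CompleteSpace (n → n → R))
  exact NormedSpace.exp_series_hasSum_exp' (𝕂 := ℚ) M

lemma hasSum_exp_mulVec (M : Matrix n n R) (v : n → R) :
    HasSum (fun k : ℕ => (k !⁻¹ : ℚ) • (M ^ k *ᵥ v)) (NormedSpace.exp M *ᵥ v) := by
  simpa only [Function.comp_def, mulVec.addMonoidHomLeft, AddMonoidHom.coe_mk, ZeroHom.coe_mk,
    smul_mulVec] using (hasSum_exp_matrix M).map (mulVec.addMonoidHomLeft v)
      (continuous_id.matrix_mulVec continuous_const)

lemma exp_mulVec_congr {M N : Matrix n n R} {v : n → R} (h : ∀ k, M ^ k *ᵥ v = N ^ k *ᵥ v) :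
    NormedSpace.exp M *ᵥ v = NormedSpace.exp N *ᵥ v := by
  refine (hasSum_exp_mulVec M v).unique ?_
  simpa only [h] using hasSum_exp_mulVec N v

lemma map_exp_matrix [Ring S] [Algebra ℚ S] [TopologicalSpace S] [IsTopologicalRing S] [T2Space S]
    {f : R →+* S} (hf : Continuous f) (M : Matrix n n R) :
    (NormedSpace.exp M).map f = NormedSpace.exp (M.map f) := by
  have hsum := (hasSum_exp_matrix M).map f.mapMatrix (continuous_id.matrix_map hf)
  simp only [Function.comp_def, map_rat_smul, map_pow, RingHom.mapMatrix_apply] at hsum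
  rw [← hsum.tsum_eq, NormedSpace.exp_eq_tsum_rat]

end Exponential

lemma exp_add_mulVec_eq_exp_mulVec {n R : Type*} [Fintype n] [DecidableEq n]
    [NormedCommRing R] [NormedAlgebra ℚ R] [CompleteSpace R] {A B : Matrix n n R} {v : n → R}
    (h : ∀ j < Fintype.card n, (A * B ^ j) *ᵥ v = 0) :
    NormedSpace.exp (A + B) *ᵥ v = NormedSpace.exp B *ᵥ v :=
  exp_mulVec_congr (add_pow_mulVec_eq_pow_mulVec (mul_pow_mulVec_eq_zero_of_lt_card h))

lemma map_mulVec_comp {m n R S : Type*} [Fintype n] [NonAssocSemiring R] [NonAssocSemiring S]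
    (f : R →+* S) (M : Matrix m n R) (v : n → R) : M.map f *ᵥ (f ∘ v) = f ∘ (M *ᵥ v) :=
  funext fun i => (f.map_mulVec M v i).symm

lemma map_re_add_I_smul_map_im {m n : Type*} (F : Matrix m n ℂ) :
    (F.map re).map ofRealHom + I • (F.map im).map ofRealHom = F := by
  ext i j
  simp [mul_comm I, re_add_im]

section RealVector

variable {n : Type*} [Fintype n] [DecidableEq n] (F : Matrix n n ℂ) {X : n → ℝ}

lemma exp_smul_mulVec_ofReal_eq_exp_smul_im_mulVec
    (hX : ∀ j < Fintype.card n, (F.map re * F.map im ^ j) *ᵥ X = 0) (z : ℂ) :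
    NormedSpace.exp (z • F) *ᵥ (ofRealHom ∘ X) =
      NormedSpace.exp ((z * I) • (F.map im).map ofRealHom) *ᵥ (ofRealHom ∘ X) := by
  set A := (F.map re).map ofRealHom
  set B := (F.map im).map ofRealHom
  have hAB (j : ℕ) (hj : j < Fintype.card n) : (A * B ^ j) *ᵥ (ofRealHom ∘ X) = 0 := by
    have hmap : A * B ^ j = (F.map re * F.map im ^ j).map ofRealHom := by
      simp only [A, B, ← RingHom.mapMatrix_apply, map_mul, map_pow]
    rw [hmap, map_mulVec_comp, hX j hj]
    exact funext fun _ => map_zero ofRealHom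
  have hsmul : z • F = z • A + (z * I) • B := by
    rw [mul_smul, ← smul_add, map_re_add_I_smul_map_im]
  rw [hsmul]
  refine exp_add_mulVec_eq_exp_mulVec fun j hj => ?_
  rw [smul_pow, Matrix.smul_mul, Matrix.mul_smul, smul_mulVec, smul_mulVec, hAB j hj, smul_zero,
    smul_zero]

theorem stmt_9_general
    (hX : ∀ j < Fintype.card n, (F.map re * F.map im ^ j) *ᵥ X = 0) (t : ℝ) :
    NormedSpace.exp ((2 * I * t : ℂ) • F) *ᵥ (fun j => (X j : ℂ)) =
      fun j => ((NormedSpace.exp (-(2 * t) • F.map im) *ᵥ X) j : ℂ) := by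
  have hreal : (2 * I * t * I : ℂ) • (F.map im).map ofRealHom =
      (-(2 * t) • F.map im).map ofRealHom := by
    ext i j
    apply Complex.ext <;> simp
  calc NormedSpace.exp ((2 * I * t : ℂ) • F) *ᵥ (ofRealHom ∘ X)
      = NormedSpace.exp ((-(2 * t) • F.map im).map ofRealHom) *ᵥ (ofRealHom ∘ X) := by
        rw [exp_smul_mulVec_ofReal_eq_exp_smul_im_mulVec F hX, hreal]
    _ = (NormedSpace.exp (-(2 * t) • F.map im)).map ofRealHom *ᵥ (ofRealHom ∘ X) := by
        rw [map_exp_matrix continuous_ofReal]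
    _ = ofRealHom ∘ (NormedSpace.exp (-(2 * t) • F.map im) *ᵥ X) :=
        map_mulVec_comp ofRealHom _ X

end RealVector

/-- Let `Q ∈ ℂ^{2d×2d}` be symmetric with Hamilton map `F = J Q` and
singular space `S`.  Then for every `X ∈ S` and `t ∈ ℝ`,
`exp(2itF) X = exp(−2t Im F) X`. -/
theorem stmt_9 (d : ℕ) (Q : Matrix (Fin d ⊕ Fin d) (Fin d ⊕ Fin d) ℂ) (hQ : Q.IsSymm) :
    ∀ X ∈ singularSpace d Q, ∀ t : ℝ,
      (NormedSpace.exp ((2 * Complex.I * t) • (J d * Q))).mulVec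
          (fun j => (X j : ℂ))
        = fun j => ((NormedSpace.exp ((-(2 * t)) •
            ((J d * Q).map Complex.im))).mulVec X j : ℂ) := by
  intro X hX t
  refine stmt_9_general (J d * Q) (fun j hj => hX j ?_) t
  rw [Fintype.card_sum, Fintype.card_fin] at hj
  omega

end Stmt9
end

section
/- Let Q ∈ ℂ^{2d×2d} be symmetric, F = J Q, and let S be the singular space of Q. Then (Re F)·S = {0}, (Im F)·S ⊆ S, and for every t ∈ ℝ the linear map exp(−2 t Im F) maps S bijectively onto itself: exp(−2 t Im F)·S = S. -/
open Matrix Complex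

namespace Stmt10

/-- The standard symplectic matrix `J = [[0, I],[−I, 0]]` on `ℂ^{2d} = ℂ^d ⊕ ℂ^d`. -/
noncomputable def J (d : ℕ) : Matrix (Fin d ⊕ Fin d) (Fin d ⊕ Fin d) ℂ :=
  Matrix.fromBlocks 0 1 (-1) 0

/-- The singular space of a symmetric `Q ∈ ℂ^{2d×2d}` with Hamilton map `F = J Q`:
`S = { X ∈ ℝ^{2d} : Re F (Im F)^j X = 0 for 0 ≤ j ≤ 2d−1 }`. -/
def singularSpace (d : ℕ) (Q : Matrix (Fin d ⊕ Fin d) (Fin d ⊕ Fin d) ℂ) :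
    Set (Fin d ⊕ Fin d → ℝ) :=
  {X | ∀ j : ℕ, j ≤ 2 * d - 1 →
    (((J d * Q).map Complex.re) * ((J d * Q).map Complex.im) ^ j).mulVec X = 0}

/-!
By the Cayley–Hamilton theorem the powers `B ^ j` with `j < card n` span the whole algebra `R[B]`.
A vector is therefore killed by all `A * B ^ j` with `j < card n` if and only if it is killed by
`A * C` for every `C ∈ R[B]`, and the latter condition is stable under the action of `R[B]`.
Over `ℝ` or `ℂ` the finite-dimensional algebra `𝕜[B]` is closed, hence contains `exp (c • B)` and
its inverse `exp (-c • B)`.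
-/

section CommRing

variable {R m n : Type*} [CommRing R] [Fintype n] [DecidableEq n]

/-- The `k`-step unobservable subspace of the pair `(A, B)` in the sense of control theory: the
states `X` for which the first `k` outputs `A X, A B X, …, A B ^ (k - 1) X` of the system
`X ↦ B X` vanish. The singular space is the case `A = Re F`, `B = Im F`. -/
def unobservableSubspace (A : Matrix m n R) (B : Matrix n n R) (k : ℕ) : Submodule R (n → R) :=
  ⨅ j < k, LinearMap.ker (A * B ^ j).mulVecLin

theorem mem_unobservableSubspace {A : Matrix m n R} {B : Matrix n n R} {k : ℕ} {X : n → R} :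
    X ∈ unobservableSubspace A B k ↔ ∀ j < k, (A * B ^ j) *ᵥ X = 0 := by
  simp only [unobservableSubspace, Submodule.mem_iInf, LinearMap.mem_ker, mulVecLin_apply]

theorem span_pow_lt_card_eq_adjoin (B : Matrix n n R) :
    Submodule.span R ((B ^ ·) '' Set.Iio (Fintype.card n)) =
      Subalgebra.toSubmodule (Algebra.adjoin R {B}) := by
  nontriviality R
  simpa only [charpoly_natDegree_eq_dim, Finset.coe_image, Finset.coe_range] using
    Submodule.span_range_natDegree_eq_adjoin B.charpoly_monic B.aeval_self_charpoly

theorem mem_unobservableSubspace_iff_forall_mem_adjoin {A : Matrix m n R} {B : Matrix n n R}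
    {k : ℕ} (hk : Fintype.card n ≤ k) {X : n → R} :
    X ∈ unobservableSubspace A B k ↔ ∀ C ∈ Algebra.adjoin R {B}, (A * C) *ᵥ X = 0 := by
  rw [mem_unobservableSubspace]
  refine ⟨fun hX C hC => ?_, fun hX j _ => hX _ (pow_mem (Algebra.self_mem_adjoin_singleton R B) j)⟩
  rw [← Subalgebra.mem_toSubmodule, ← span_pow_lt_card_eq_adjoin] at hC
  induction hC using Submodule.span_induction with
  | mem _ h =>
    obtain ⟨j, hj, rfl⟩ := h
    exact hX j (lt_of_lt_of_le hj hk)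
  | zero => rw [Matrix.mul_zero, zero_mulVec]
  | add C D _ _ hC hD => rw [Matrix.mul_add, add_mulVec, hC, hD, add_zero]
  | smul r C _ hC => rw [Matrix.mul_smul, smul_mulVec, hC, smul_zero]

theorem mulVec_eq_zero_of_mem_unobservableSubspace {A : Matrix m n R} {B : Matrix n n R} {k : ℕ}
    (hk : Fintype.card n ≤ k) {X : n → R} (hX : X ∈ unobservableSubspace A B k) :
    A *ᵥ X = 0 := by
  simpa only [Matrix.mul_one] using
    (mem_unobservableSubspace_iff_forall_mem_adjoin hk).1 hX 1 (one_mem _)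

theorem mulVec_mem_unobservableSubspace {A : Matrix m n R} {B C : Matrix n n R} {k : ℕ}
    (hk : Fintype.card n ≤ k) (hC : C ∈ Algebra.adjoin R {B}) {X : n → R}
    (hX : X ∈ unobservableSubspace A B k) :
    C *ᵥ X ∈ unobservableSubspace A B k := by
  rw [mem_unobservableSubspace_iff_forall_mem_adjoin hk] at hX ⊢
  intro D hD
  rw [mulVec_mulVec, Matrix.mul_assoc]
  exact hX (D * C) (mul_mem hD hC)

end CommRing

theorem exp_smul_mem_adjoin_singleton {𝕜 A : Type*} [NontriviallyNormedField 𝕜]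
    [CompleteSpace 𝕜] [CharZero 𝕜] [Ring A] [Algebra 𝕜 A] [FiniteDimensional 𝕜 A]
    [TopologicalSpace A] [IsTopologicalRing A] [ContinuousSMul 𝕜 A] [T2Space A] (a : A)
    (c : 𝕜) : NormedSpace.exp (c • a) ∈ Algebra.adjoin 𝕜 {a} := by
  let : Algebra ℚ A := Algebra.compHom A (algebraMap ℚ 𝕜)
  have : IsScalarTower ℚ 𝕜 A := .of_algebraMap_eq' rfl
  exact NormedSpace.exp_mem (R := 𝕜) (s := Algebra.adjoin 𝕜 {a})
    (Subalgebra.toSubmodule (Algebra.adjoin 𝕜 {a})).closed_of_finiteDimensional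
    (Subalgebra.smul_mem _ (Algebra.self_mem_adjoin_singleton 𝕜 a) c)

section RCLike

variable {𝕜 m n : Type*} [RCLike 𝕜] [Fintype n] [DecidableEq n]

theorem bijOn_exp_smul_mulVec_unobservableSubspace (A : Matrix m n 𝕜) (B : Matrix n n 𝕜) {k : ℕ}
    (hk : Fintype.card n ≤ k) (c : 𝕜) :
    Set.BijOn (NormedSpace.exp (c • B) *ᵥ ·)
      (unobservableSubspace A B k) (unobservableSubspace A B k) := by
  have mapsTo (a : 𝕜) : Set.MapsTo (NormedSpace.exp (a • B) *ᵥ ·)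
      (unobservableSubspace A B k) (unobservableSubspace A B k) :=
    fun _ => mulVec_mem_unobservableSubspace hk (exp_smul_mem_adjoin_singleton B a)
  have exp_neg_mulVec_exp (a : 𝕜) (X : n → 𝕜) :
      NormedSpace.exp (-a • B) *ᵥ (NormedSpace.exp (a • B) *ᵥ X) = X := by
    have isUnit_det : IsUnit (NormedSpace.exp (a • B)).det :=
      (isUnit_iff_isUnit_det _).1 (Matrix.isUnit_exp (a • B))
    rw [neg_smul, Matrix.exp_neg, mulVec_mulVec, nonsing_inv_mul _ isUnit_det, one_mulVec]
  refine Set.InvOn.bijOn (f' := (NormedSpace.exp (-c • B) *ᵥ ·))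
    ⟨fun X _ => exp_neg_mulVec_exp c X, fun X _ => ?_⟩ (mapsTo c) (mapsTo (-c))
  simpa only [neg_neg] using exp_neg_mulVec_exp (-c) X

theorem stmt_10_general (A : Matrix m n 𝕜) (B : Matrix n n 𝕜) {k : ℕ} (hk : Fintype.card n ≤ k) :
    (∀ X ∈ unobservableSubspace A B k, A *ᵥ X = 0) ∧
    (∀ X ∈ unobservableSubspace A B k, B *ᵥ X ∈ unobservableSubspace A B k) ∧
    (∀ c : 𝕜, Set.BijOn (NormedSpace.exp (c • B) *ᵥ ·)
      (unobservableSubspace A B k) (unobservableSubspace A B k)) :=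
  ⟨fun _ => mulVec_eq_zero_of_mem_unobservableSubspace hk,
    fun _ => mulVec_mem_unobservableSubspace hk (Algebra.self_mem_adjoin_singleton 𝕜 B),
    bijOn_exp_smul_mulVec_unobservableSubspace A B hk⟩

end RCLike

-- At `d = 0` the truncated bound `j ≤ 2 * d - 1` still admits `j = 0`, hence `2 * d - 1 + 1` steps.
theorem singularSpace_eq_unobservableSubspace (d : ℕ)
    (Q : Matrix (Fin d ⊕ Fin d) (Fin d ⊕ Fin d) ℂ) :
    singularSpace d Q = unobservableSubspace ((J d * Q).map re) ((J d * Q).map im)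
      (2 * d - 1 + 1) := by
  ext X
  simp only [singularSpace, Set.mem_ofPred_eq, SetLike.mem_coe, mem_unobservableSubspace,
    Nat.lt_succ_iff]

/-- stability properties of the singular space.  Let `Q ∈ ℂ^{2d×2d}` be
symmetric with Hamilton map `F = J Q` and singular space `S`.  Then `(Re F) S = {0}`,
`(Im F) S ⊆ S`, and for every `t ∈ ℝ`, `exp(−2t Im F) S = S`. -/
theorem stmt_10 (d : ℕ) (Q : Matrix (Fin d ⊕ Fin d) (Fin d ⊕ Fin d) ℂ) (hQ : Q.IsSymm) :
    (∀ X ∈ singularSpace d Q, ((J d * Q).map Complex.re).mulVec X = 0) ∧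
    (∀ X ∈ singularSpace d Q,
      ((J d * Q).map Complex.im).mulVec X ∈ singularSpace d Q) ∧
    (∀ t : ℝ,
      (fun X => (NormedSpace.exp ((-(2 * t)) • ((J d * Q).map Complex.im))).mulVec X) ''
          singularSpace d Q
        = singularSpace d Q) := by
  obtain ⟨hre, him, hexp⟩ := stmt_10_general ((J d * Q).map re) ((J d * Q).map im)
    (k := 2 * d - 1 + 1) (by rw [Fintype.card_sum, Fintype.card_fin]; omega)
  rw [singularSpace_eq_unobservableSubspace]
  exact ⟨hre, him, fun t => (hexp (-(2 * t))).image_eq⟩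

end Stmt10
end

section
/- Let R_r, R_i ∈ ℝ^{d×d} be symmetric matrices with R_i positive semidefinite, let N ≥ 0 and L ∈ ℝ^{d×N}, and set ρ'(x) = 2(R_r + i R_i)x for x ∈ ℂ^d. Let λ = { (x, ρ'(x) + Lθ) : x ∈ ℂ^d, θ ∈ ℂ^N, L^t x = 0 } ⊆ ℂ^d × ℂ^d. Then for every X = (x, ρ'(x) + Lθ) ∈ λ one has i·σ(X̄, X) = 4·⟨R_i x, x̄⟩ (a nonnegative real number); in particular, for X ∈ λ, σ(X̄, X) = 0 if and only if R_i x = 0. -/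
open Matrix Complex

namespace Stmt11

/-- Bilinear (non-sesquilinear) pairing `⟨u,v⟩ = Σ_j u_j v_j` on `ℂ^d`. -/
noncomputable def pairC {d : ℕ} (u v : Fin d → ℂ) : ℂ := ∑ j, u j * v j

/-- Canonical symplectic form `σ((x,ξ),(x',ξ')) = ⟨x',ξ⟩ − ⟨x,ξ'⟩` on `ℂ^d × ℂ^d`. -/
noncomputable def sform {d : ℕ} (X Y : (Fin d → ℂ) × (Fin d → ℂ)) : ℂ :=
  pairC Y.1 X.2 - pairC X.1 Y.2

/-- Entrywise complex conjugation of a vector. -/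
noncomputable def conjV {d : ℕ} (x : Fin d → ℂ) : Fin d → ℂ := fun j => starRingEnd ℂ (x j)

/-!
With the Hermitian pairing `z = x̄ · ξ`, conjugation gives `σ(X̄, X) = z̄ - z` for `X = (x, ξ)`, so
`i σ(X̄, X) = 2 Im z`. For `ξ = 2(A + iB)x + Lθ` with `A` and `B` Hermitian, both quadratic forms
`x̄ · Ax` and `x̄ · Bx` are real, and `x̄ · Lθ` vanishes when `Lᴴx = 0`; hence `Im z = 2 (x̄ · Bx)`.
For `B` positive semidefinite, this is nonnegative and vanishes only when `Bx = 0`.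
-/

section ConjugatePairing

variable {d : ℕ}

lemma pairC_eq_dotProduct (u v : Fin d → ℂ) : pairC u v = u ⬝ᵥ v := rfl

lemma conjV_eq_star (x : Fin d → ℂ) : conjV x = star x := rfl

lemma I_mul_sform_conjV_self (x ξ : Fin d → ℂ) :
    I * sform (conjV x, conjV ξ) (x, ξ) = 2 * ((star x ⬝ᵥ ξ).im : ℂ) := by
  have hconj : x ⬝ᵥ star ξ = star (star x ⬝ᵥ ξ) := by
    rw [← star_dotProduct_star, star_star, dotProduct_comm]
  calc I * sform (conjV x, conjV ξ) (x, ξ)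
      = I * (star (star x ⬝ᵥ ξ) - star x ⬝ᵥ ξ) := by
        simp only [sform, pairC_eq_dotProduct, conjV_eq_star, hconj]
    _ = 2 * ((star x ⬝ᵥ ξ).im : ℂ) := by
        rw [← neg_sub, star_def, sub_conj, ofReal_mul, ofReal_ofNat]
        linear_combination (-2 * ((star x ⬝ᵥ ξ).im : ℂ)) * I_mul_I

end ConjugatePairing

section MapEntries

lemma semiconj_ofReal_star : Function.Semiconj ((↑) : ℝ → ℂ) star star :=
  fun r ↦ (conj_ofReal r).symm

lemma conjTranspose_map_eq_transpose_map {m n R S : Type*} [Star R] [TrivialStar R] [Star S]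
    (A : Matrix m n R) {f : R → S} (hf : Function.Semiconj f star star) :
    (A.map f)ᴴ = (A.map f)ᵀ := by
  rw [← conjTranspose_map f hf, conjTranspose_eq_transpose_of_trivial, transpose_map]

open scoped ComplexOrder MatrixOrder in
lemma posSemidef_map {n 𝕜 R : Type*} [Finite n] [RCLike 𝕜] [Ring R] [PartialOrder R] [StarRing R]
    [StarOrderedRing R] {A : Matrix n n 𝕜} (hA : A.PosSemidef) (f : 𝕜 →+* R)
    (hf : Function.Semiconj f star star) : (A.map f).PosSemidef := by
  classical
  have := Fintype.ofFinite n
  obtain ⟨C, rfl⟩ := CStarAlgebra.nonneg_iff_eq_star_mul_self.mp hA.nonneg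
  rw [star_eq_conjTranspose, Matrix.map_mul, conjTranspose_map f hf]
  exact posSemidef_conjTranspose_mul_self _

end MapEntries

section HermitianForms

variable {m n : Type*} [Fintype m] [Fintype n]

lemma star_dotProduct_mulVec_eq_zero {R : Type*} [NonUnitalSemiring R] [StarRing R]
    {L : Matrix m n R} {x : m → R} (hx : Lᴴ *ᵥ x = 0) (θ : n → R) :
    star x ⬝ᵥ L *ᵥ θ = 0 := by
  have hxL : star x ᵥ* L = 0 := by
    rw [← conjTranspose_conjTranspose L, ← star_mulVec, hx, star_zero]
  rw [dotProduct_mulVec, hxL, zero_dotProduct]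

lemma ofReal_re_star_dotProduct_mulVec_self {A : Matrix n n ℂ} (hA : A.IsHermitian)
    (x : n → ℂ) : ((star x ⬝ᵥ A *ᵥ x).re : ℂ) = star x ⬝ᵥ A *ᵥ x :=
  Complex.ext rfl (hA.im_star_dotProduct_mulVec_self x).symm

lemma im_star_dotProduct_add_I_smul_mulVec_add {A B : Matrix m m ℂ} (hA : A.IsHermitian)
    (hB : B.IsHermitian) {L : Matrix m n ℂ} {x : m → ℂ} (hx : Lᴴ *ᵥ x = 0) (θ : n → ℂ) :
    (star x ⬝ᵥ ((2 : ℂ) • (A + I • B) *ᵥ x + L *ᵥ θ)).im = 2 * (star x ⬝ᵥ B *ᵥ x).re := by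
  have expand : star x ⬝ᵥ ((2 : ℂ) • (A + I • B) *ᵥ x + L *ᵥ θ) =
      2 * (((star x ⬝ᵥ A *ᵥ x).re : ℂ) + I * ((star x ⬝ᵥ B *ᵥ x).re : ℂ)) := by
    simp only [ofReal_re_star_dotProduct_mulVec_self hA, ofReal_re_star_dotProduct_mulVec_self hB,
      star_dotProduct_mulVec_eq_zero hx, add_mulVec, smul_mulVec, dotProduct_add,
      dotProduct_smul, smul_eq_mul, add_zero]
  rw [expand]
  simp

end HermitianForms

section ConjugateSymplecticForm

variable {d : ℕ} {n : Type*} [Fintype n] {A B : Matrix (Fin d) (Fin d) ℂ}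
  {L : Matrix (Fin d) n ℂ} {x : Fin d → ℂ}

lemma I_mul_sform_conjV_self_eq_four_mul (hA : A.IsHermitian) (hB : B.IsHermitian)
    (hx : Lᴴ *ᵥ x = 0) (θ : n → ℂ) :
    letI ξ := (2 : ℂ) • (A + I • B) *ᵥ x + L *ᵥ θ
    I * sform (conjV x, conjV ξ) (x, ξ) = 4 * (star x ⬝ᵥ B *ᵥ x) := by
  rw [I_mul_sform_conjV_self, im_star_dotProduct_add_I_smul_mulVec_add hA hB hx, ofReal_mul,
    ofReal_re_star_dotProduct_mulVec_self hB, ofReal_ofNat]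
  ring

open scoped ComplexOrder in
theorem stmt_11_general (hA : A.IsHermitian) (hB : B.PosSemidef) (hx : Lᴴ *ᵥ x = 0)
    (θ : n → ℂ) :
    letI X := (x, (2 : ℂ) • (A + I • B) *ᵥ x + L *ᵥ θ)
    I * sform (conjV X.1, conjV X.2) X = 4 * pairC (B *ᵥ x) (conjV x) ∧
      (∃ r : ℝ, 0 ≤ r ∧ I * sform (conjV X.1, conjV X.2) X = r) ∧
      (sform (conjV X.1, conjV X.2) X = 0 ↔ B *ᵥ x = 0) := by
  have value := I_mul_sform_conjV_self_eq_four_mul hA hB.isHermitian hx θ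
  refine ⟨?_, ⟨4 * (star x ⬝ᵥ B *ᵥ x).re, ?_, ?_⟩, ?_⟩
  · rw [value, pairC_eq_dotProduct, conjV_eq_star, dotProduct_comm]
  · exact mul_nonneg zero_le_four (hB.re_dotProduct_nonneg x)
  · rw [value, ofReal_mul, ofReal_re_star_dotProduct_mulVec_self hB.isHermitian, ofReal_ofNat]
  · rw [← hB.dotProduct_mulVec_zero_iff, ← mul_eq_zero_iff_left I_ne_zero, value,
      mul_eq_zero_iff_left four_ne_zero]

end ConjugateSymplecticForm

/-- Remark: intrinsic characterization of `λ̃ ⊆ λ`.  With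
`ρ'(x) = 2(R_r + i R_i)x` and `λ = { (x, ρ'(x) + Lθ) : Lᵗ x = 0 }`, every element
`X = (x, ρ'(x) + Lθ)` of `λ` satisfies `i σ(X̄,X) = 4⟨R_i x, x̄⟩`, a nonnegative real
number; in particular `σ(X̄,X) = 0` iff `R_i x = 0`. -/
theorem stmt_11 (d N : ℕ) (Rr Ri : Matrix (Fin d) (Fin d) ℝ)
    (hRr : Rr.IsSymm) (hRi : Ri.IsSymm) (hRiPos : Ri.PosSemidef)
    (L : Matrix (Fin d) (Fin N) ℝ) :
    ∀ (x : Fin d → ℂ) (θ : Fin N → ℂ),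
      (L.map ((↑) : ℝ → ℂ))ᵀ.mulVec x = 0 →
      (letI ρ' : Fin d → ℂ :=
        (2 : ℂ) • (Rr.map ((↑) : ℝ → ℂ) + Complex.I • Ri.map ((↑) : ℝ → ℂ)).mulVec x
       letI X : (Fin d → ℂ) × (Fin d → ℂ) :=
        (x, ρ' + (L.map ((↑) : ℝ → ℂ)).mulVec θ)
       Complex.I * sform (conjV X.1, conjV X.2) X
          = 4 * pairC ((Ri.map ((↑) : ℝ → ℂ)).mulVec x) (conjV x) ∧
       (∃ r : ℝ, 0 ≤ r ∧
          Complex.I * sform (conjV X.1, conjV X.2) X = r) ∧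
       (sform (conjV X.1, conjV X.2) X = 0 ↔
          (Ri.map ((↑) : ℝ → ℂ)).mulVec x = 0)) := by
  intro x θ hx
  rw [← conjTranspose_map_eq_transpose_map L semiconj_ofReal_star] at hx
  open scoped ComplexOrder in
  exact stmt_11_general ((isHermitian_iff_isSymm.mpr hRr).map _ semiconj_ofReal_star)
    (posSemidef_map hRiPos ofRealHom semiconj_ofReal_star) hx θ

end Stmt11
end

section
/- Let p ∈ ℕ with p ≥ 2, let ξ ∈ ℝ, and let φ ∈ C^∞(ℝ). Define the operator T by (Tψ)(y) = d/dy ( ψ(y) / (p y^{p−1} − ξ) ) on the open set Ω = { y ∈ ℝ : p y^{p−1} ≠ ξ }. Then for every integer m ≥ 1 there exists a finitely supported family of real constants (C_{s,ℓ,n}) indexed by (s,ℓ,n) ∈ ℕ × ℕ × ℕ, depending only on p and m (not on ξ or φ), with C_{s,ℓ,n} = 0 unless n ≥ m and (p−1)n − s ≥ (p−1)m, such that for all y ∈ Ω: T^m φ(y) = Σ_{(s,ℓ,n)} C_{s,ℓ,n} · y^s · φ^{(ℓ)}(y) / (p y^{p−1} − ξ)^n. -/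
namespace Stmt12

/-- The operator `(Tψ)(y) = d/dy ( ψ(y) / (p y^{p−1} − ξ) )`. -/
noncomputable def T (p : ℕ) (ξ : ℝ) (ψ : ℝ → ℝ) : ℝ → ℝ :=
  fun y => deriv (fun z => ψ z / ((p : ℝ) * z ^ (p - 1) - ξ)) y

/-! Write `a = p` and `k = p - 1`. The span of the terms `y ^ s • φ^(ℓ)(y) / (a y ^ k - ξ) ^ n` is
stable under division by `a y ^ k - ξ` followed by differentiation, and the resulting map on
coefficients involves neither `ξ` nor `φ`. The derivative falls on `y ^ s`, on `φ^(ℓ)`, or on the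
denominator, so `(s, ℓ, n)` moves to `(s - 1, ℓ, n + 1)`, `(s, ℓ + 1, n + 1)` or
`(s + k - 1, ℓ, n + 2)`. Each move raises `n` by at least one and `k n - s` by at least `k`. -/

open Finsupp (single linearCombination supported)

section General

variable {𝕜 : Type*} [NontriviallyNormedField 𝕜] {E : Type*} [NormedAddCommGroup E]
  [NormedSpace 𝕜 E]

/-- The operator `ψ ↦ d/dy (ψ / (a y ^ k - ξ))` on vector-valued functions, generalizing `T`. -/
noncomputable def divDeriv (a ξ : 𝕜) (k : ℕ) (ψ : 𝕜 → E) : 𝕜 → E :=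
  deriv fun z => (a * z ^ k - ξ)⁻¹ • ψ z

/-- The term `y ^ s • φ^(ℓ)(y) / (a y ^ k - ξ) ^ n` with index `t = (s, ℓ, n)`; the iterates of
`divDeriv` are linear combinations of such terms. -/
noncomputable def weightedDeriv (a ξ : 𝕜) (k : ℕ) (φ : 𝕜 → E) (y : 𝕜) (t : ℕ × ℕ × ℕ) : E :=
  (y ^ t.1 / (a * y ^ k - ξ) ^ t.2.2) • iteratedDeriv t.2.1 φ y

/-- The indices `(s, ℓ, n)` of the terms `weightedDeriv` that may occur in the `m`-th iterate of
`divDeriv`. The condition `k n - s ≥ k m` is written without subtraction. -/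
def indexSet (k m : ℕ) : Set (ℕ × ℕ × ℕ) :=
  {t | t.2.1 ≤ m ∧ m ≤ t.2.2 ∧ t.1 + k * m ≤ k * t.2.2}

/-- The coefficients, with respect to `weightedDeriv`, of the image under `divDeriv` of the term
with index `t`. Where a truncated subtraction `s - 1` or `k - 1` differs from the true one, the
coefficient is zero. -/
noncomputable def termStep (a : 𝕜) (k : ℕ) (t : ℕ × ℕ × ℕ) : (ℕ × ℕ × ℕ) →₀ 𝕜 :=
  single (t.1 - 1, t.2.1, t.2.2 + 1) (t.1 : 𝕜)
    + single (t.1, t.2.1 + 1, t.2.2 + 1) 1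
    - single (t.1 + (k - 1), t.2.1, t.2.2 + 2) (((t.2.2 + 1 : ℕ) : 𝕜) * (a * k))

/-- The linear extension of `termStep`: the action of `divDeriv` on coefficient families. -/
noncomputable def coeffStep (a : 𝕜) (k : ℕ) :
    ((ℕ × ℕ × ℕ) →₀ 𝕜) →ₗ[𝕜] ((ℕ × ℕ × ℕ) →₀ 𝕜) :=
  linearCombination 𝕜 (termStep a k)

/-- The coefficients `C_{s,ℓ,n}` of the `m`-th iterate of `divDeriv`. -/
noncomputable def iterCoeff (a : 𝕜) (k m : ℕ) : (ℕ × ℕ × ℕ) →₀ 𝕜 :=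
  (coeffStep a k)^[m] (single (0, 0, 0) 1)

theorem iterCoeff_succ (a : 𝕜) (k m : ℕ) :
    iterCoeff a k (m + 1) = coeffStep a k (iterCoeff a k m) :=
  Function.iterate_succ_apply' _ _ _

theorem termStep_mem_supported (a : 𝕜) {k m : ℕ} {t : ℕ × ℕ × ℕ} (ht : t ∈ indexSet k m) :
    termStep a k t ∈ supported 𝕜 𝕜 (indexSet k (m + 1)) := by
  obtain ⟨s, ℓ, n⟩ := t
  obtain ⟨hℓ, hn, hs⟩ : ℓ ≤ m ∧ m ≤ n ∧ s + k * m ≤ k * n := ht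
  refine Submodule.sub_mem _ (Submodule.add_mem _ ?_ ?_) ?_ <;>
    refine Finsupp.single_mem_supported _ _ ?_ <;>
    simp only [indexSet, Set.mem_ofPred_eq, mul_add] <;> omega

theorem coeffStep_mem_supported (a : 𝕜) {k m : ℕ} {C : (ℕ × ℕ × ℕ) →₀ 𝕜}
    (hC : C ∈ supported 𝕜 𝕜 (indexSet k m)) :
    coeffStep a k C ∈ supported 𝕜 𝕜 (indexSet k (m + 1)) :=
  Submodule.sum_mem _ fun _ ht => Submodule.smul_mem _ _ (termStep_mem_supported a (hC ht))

theorem iterCoeff_mem_supported (a : 𝕜) (k m : ℕ) :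
    iterCoeff a k m ∈ supported 𝕜 𝕜 (indexSet k m) := by
  induction m with
  | zero => exact Finsupp.single_mem_supported _ _ (by simp [indexSet])
  | succ m ih => exact iterCoeff_succ a k m ▸ coeffStep_mem_supported a ih

theorem hasDerivAt_pow_div_pow {a ξ y : 𝕜} {k : ℕ} (hy : a * y ^ k - ξ ≠ 0) (s n : ℕ) :
    HasDerivAt (fun z => z ^ s / (a * z ^ k - ξ) ^ n)
      (s * (y ^ (s - 1) / (a * y ^ k - ξ) ^ n)
        - n * (a * k) * (y ^ (s + (k - 1)) / (a * y ^ k - ξ) ^ (n + 1))) y := by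
  have hden : HasDerivAt (fun z : 𝕜 => a * z ^ k - ξ) (a * (k * y ^ (k - 1))) y :=
    ((hasDerivAt_pow k y).const_mul a).sub_const ξ
  refine ((hasDerivAt_pow s y).fun_div (hden.fun_pow n) (pow_ne_zero n hy)).congr_deriv ?_
  rw [pow_add y s]
  generalize a * y ^ k - ξ = D at hy
  cases n with
  | zero => simp
  | succ n =>
    rw [Nat.add_sub_cancel]
    field_simp
    ring

theorem hasDerivAt_inv_smul_weightedDeriv {a ξ y : 𝕜} {k : ℕ} (hy : a * y ^ k - ξ ≠ 0)
    {φ : 𝕜 → E} {t : ℕ × ℕ × ℕ} (hφ : DifferentiableAt 𝕜 (iteratedDeriv t.2.1 φ) y) :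
    HasDerivAt (fun z => (a * z ^ k - ξ)⁻¹ • weightedDeriv a ξ k φ z t)
      (linearCombination 𝕜 (weightedDeriv a ξ k φ y) (termStep a k t)) y := by
  obtain ⟨s, ℓ, n⟩ := t
  have hℓ : HasDerivAt (iteratedDeriv ℓ φ) (iteratedDeriv (ℓ + 1) φ y) y := by
    simpa only [iteratedDeriv_succ] using hφ.hasDerivAt
  have absorb_inv : (fun z => (a * z ^ k - ξ)⁻¹ • weightedDeriv a ξ k φ z (s, ℓ, n)) =
      fun z => (z ^ s / (a * z ^ k - ξ) ^ (n + 1)) • iteratedDeriv ℓ φ z := by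
    funext z
    rw [weightedDeriv, smul_smul, inv_mul_eq_div, div_div, ← pow_succ]
  rw [absorb_inv]
  refine ((hasDerivAt_pow_div_pow hy s (n + 1)).fun_smul hℓ).congr_deriv ?_
  simp only [termStep, map_add, map_sub, Finsupp.linearCombination_single, weightedDeriv]
  module

theorem hasDerivAt_inv_smul_linearCombination {a ξ y : 𝕜} {k : ℕ} (hy : a * y ^ k - ξ ≠ 0)
    {φ : 𝕜 → E} {C : (ℕ × ℕ × ℕ) →₀ 𝕜}
    (hφ : ∀ t ∈ C.support, DifferentiableAt 𝕜 (iteratedDeriv t.2.1 φ) y) :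
    HasDerivAt (fun z => (a * z ^ k - ξ)⁻¹ • linearCombination 𝕜 (weightedDeriv a ξ k φ z) C)
      (linearCombination 𝕜 (weightedDeriv a ξ k φ y) (coeffStep a k C)) y := by
  have hsum := HasDerivAt.fun_sum fun t ht =>
    (hasDerivAt_inv_smul_weightedDeriv hy (hφ t ht)).fun_const_smul (C t)
  simpa only [coeffStep, Finsupp.linearCombination_apply, Finsupp.sum, map_sum, map_smul,
    Finset.smul_sum, smul_comm (_ : 𝕜)⁻¹ (C _)] using hsum

theorem iterate_divDeriv_eq_linearCombination (a ξ : 𝕜) (k m : ℕ) {φ : 𝕜 → E}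
    (hφ : ContDiff 𝕜 m φ) {y : 𝕜} (hy : a * y ^ k - ξ ≠ 0) :
    (divDeriv a ξ k)^[m] φ y =
      linearCombination 𝕜 (weightedDeriv a ξ k φ y) (iterCoeff a k m) := by
  induction m generalizing y with
  | zero => simp [iterCoeff, weightedDeriv]
  | succ m ih =>
    have hden : ∀ᶠ z in nhds y, a * z ^ k - ξ ≠ 0 :=
      ContinuousAt.eventually_ne (by fun_prop) hy
    have hdiff : ∀ t ∈ (iterCoeff a k m).support,
        DifferentiableAt 𝕜 (iteratedDeriv t.2.1 φ) y := fun t ht =>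
      hφ.differentiable_iteratedDeriv t.2.1
        (by exact_mod_cast Nat.lt_succ_of_le (iterCoeff_mem_supported a k m ht).1) y
    rw [Function.iterate_succ_apply', iterCoeff_succ, divDeriv]
    refine ((hasDerivAt_inv_smul_linearCombination hy hdiff).congr_of_eventuallyEq ?_).deriv
    filter_upwards [hden] with z hz
    rw [ih (hφ.of_le (by exact_mod_cast m.le_succ)) hz]

end General

theorem stmt_12_general {𝕜 : Type*} [NontriviallyNormedField 𝕜] (a : 𝕜) (k m : ℕ) :
    ∃ C : (ℕ × ℕ × ℕ) →₀ 𝕜,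
      (∀ s ℓ n : ℕ, C (s, ℓ, n) ≠ 0 → ℓ ≤ m ∧ m ≤ n ∧ s + k * m ≤ k * n) ∧
      ∀ (E : Type*) [NormedAddCommGroup E] [NormedSpace 𝕜 E] (ξ : 𝕜) (φ : 𝕜 → E),
        ContDiff 𝕜 m φ → ∀ y : 𝕜, a * y ^ k ≠ ξ →
          (divDeriv a ξ k)^[m] φ y
            = C.sum fun t c => (c * y ^ t.1 / (a * y ^ k - ξ) ^ t.2.2) • iteratedDeriv t.2.1 φ y :=
  ⟨iterCoeff a k m,
    fun _ _ _ hC => iterCoeff_mem_supported a k m (Finsupp.mem_support_iff.2 hC),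
    fun E _ _ ξ φ hφ y hy => by
      simp only [iterate_divDeriv_eq_linearCombination a ξ k m hφ (sub_ne_zero.2 hy),
        Finsupp.linearCombination_apply, weightedDeriv, smul_smul, mul_div_assoc]⟩

theorem T_eq_divDeriv (p : ℕ) (ξ : ℝ) : T p ξ = divDeriv (p : ℝ) ξ (p - 1) := by
  funext ψ y
  simp only [T, divDeriv, smul_eq_mul, div_eq_inv_mul]

/-- Lemma `Tlemma`, integer case.  For `p ≥ 2` and `m ≥ 1` there is a
finitely supported family of real constants `C_{s,ℓ,n}`, depending only on `p` and `m`,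
vanishing unless `n ≥ m` and `(p−1)n − s ≥ (p−1)m`, such that for every `ξ ∈ ℝ`, every
`φ ∈ C^∞(ℝ)` and every `y` with `p y^{p−1} ≠ ξ`,
`T^m φ(y) = Σ C_{s,ℓ,n} y^s φ^{(ℓ)}(y) / (p y^{p−1} − ξ)^n`. -/
theorem stmt_12 (p : ℕ) (hp : 2 ≤ p) (m : ℕ) (hm : 1 ≤ m) :
    ∃ C : (ℕ × ℕ × ℕ) →₀ ℝ,
      (∀ s ℓ n : ℕ, C (s, ℓ, n) ≠ 0 → m ≤ n ∧ s + (p - 1) * m ≤ (p - 1) * n) ∧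
      ∀ ξ : ℝ, ∀ φ : ℝ → ℝ, ContDiff ℝ (⊤ : ℕ∞) φ →
        ∀ y : ℝ, (p : ℝ) * y ^ (p - 1) ≠ ξ →
          (T p ξ)^[m] φ y
            = C.sum fun t c =>
                c * y ^ t.1 * iteratedDeriv t.2.1 φ y
                  / ((p : ℝ) * y ^ (p - 1) - ξ) ^ t.2.2 := by
  obtain ⟨C, hC, hT⟩ := stmt_12_general (p : ℝ) (p - 1) m
  refine ⟨C, fun s ℓ n h => (hC s ℓ n h).2, fun ξ φ hφ y hy => ?_⟩
  rw [T_eq_divDeriv, hT ℝ ξ φ (hφ.of_le (mod_cast le_top)) y hy]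
  simp only [smul_eq_mul, div_mul_eq_mul_div]

end Stmt12
end

section
/- Let p > 2 be a real number with 2n ≤ p ≤ 2n+1 for some positive integer n, and let u_p : ℝ → ℂ be defined by u_p(y) = exp(i y^p) for y ≥ 0 and u_p(y) = exp( i cos(πp)|y|^p − sin(πp)|y|^p ) for y < 0 (i.e. u_p(y) = exp(i y^p) with the principal branch of the complex power). Then for every real-valued φ ∈ C_c^∞(ℝ) with supp φ ⊆ [−1,1] and every point (x₀,ξ₀) ∈ ℝ² \ {(0,0)} with x₀ ≠ 0, there exists an open cone Γ ⊆ ℝ² \ {0} containing (x₀,ξ₀) such that for every N ∈ ℕ, sup_{(x,ξ) ∈ Γ} (1 + x² + ξ²)^{N/2} · | ∫_ℝ u_p(y) e^{−i y ξ} φ(y−x) dy | < ∞. (Equivalently, the Gabor wave front set of u_p is contained in {0} × (ℝ \ {0}).) -/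
open MeasureTheory

namespace Stmt13

/-- `u_p(y) = exp(i y^p)` with the principal branch of the complex power:
`u_p(y) = exp(i y^p)` for `y ≥ 0` and
`u_p(y) = exp(i cos(πp)|y|^p − sin(πp)|y|^p)` for `y < 0`. -/
noncomputable def u (p : ℝ) : ℝ → ℂ := fun y =>
  if 0 ≤ y then Complex.exp (Complex.I * ((y ^ p : ℝ) : ℂ))
  else Complex.exp ((Complex.I * (Real.cos (Real.pi * p) : ℂ)
    - (Real.sin (Real.pi * p) : ℂ)) * ((|y| ^ p : ℝ) : ℂ))

/-!
For `|ξ| < C x` and large `x`, the phase of the short-time Fourier transform of `exp (c y ^ p)` is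
nowhere stationary: with `y = x + t`, its derivative in `t` is `x ^ (p - 1)` times
`c p (1 + t / x) ^ (p - 1) - i ξ / x ^ (p - 1)`. As `p > 2`, both `s = 1 / x` and
`η = ξ / x ^ (p - 1)` tend to `0`, and the second factor is a smooth function of `(s, η, t)` with
constant value `c p ≠ 0` at `s = η = 0`. Thus `(s, η)` ranges over a compact set on which the
principle of nonstationary phase is uniform: each integration by parts gains `x ^ (-(p - 1))`.
The half line `x < 0` reduces to `x > 0` by `y ↦ -y`, which only changes `c`; the condition
`Re c ≤ 0` there is `sin (π p) ≥ 0`.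
-/

open Set Filter Topology
open scoped ContDiff

section NonstationaryPhase

theorem integrable_mul_of_support_subset {K : Set ℝ} {a b : ℝ → ℂ} (hK : IsCompact K)
    (ha : ContinuousOn a K) (hb : ContinuousOn b K) (hbK : Function.support b ⊆ K) :
    Integrable (a * b) :=
  (integrableOn_iff_integrable_of_support_subset
    ((Function.support_mul_subset_right a b).trans hbK)).1 ((ha.mul hb).integrableOn_compact hK)

theorem integral_cexp_mul_deriv {f f' χ : ℝ → ℂ} (hχ : ContDiff ℝ 1 χ)
    (hχc : HasCompactSupport χ) (hf : ∀ t ∈ tsupport χ, HasDerivAt f (f' t) t)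
    (hf' : ContinuousOn f' (tsupport χ)) :
    ∫ t, Complex.exp (f t) * deriv χ t = -∫ t, Complex.exp (f t) * f' t * χ t := by
  have hexp : ContinuousOn (fun t => Complex.exp (f t)) (tsupport χ) := fun t ht =>
    (hf t ht).cexp.continuousAt.continuousWithinAt
  exact integral_mul_deriv_eq_deriv_mul_of_integrable (fun t ht => (hf t ht).cexp)
    (fun t _ => (hχ.differentiable one_ne_zero t).hasDerivAt)
    (integrable_mul_of_support_subset hχc hexp
      (hχ.continuous_deriv le_rfl).continuousOn support_deriv_subset)
    (integrable_mul_of_support_subset hχc (hexp.mul hf') hχ.continuous.continuousOn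
      (subset_tsupport χ))
    (integrable_mul_of_support_subset hχc hexp hχ.continuous.continuousOn (subset_tsupport χ))

variable {W F : Type*}

theorem exists_norm_integral_cexp_mul_le [TopologicalSpace W] {P : Set W} {K : Set ℝ}
    {ψ : W × ℝ → ℂ} (hP : IsCompact P) (hK : IsCompact K)
    (hψ : ContinuousOn ψ (P ×ˢ K)) (hψK : ∀ w ∈ P, ∀ t ∉ K, ψ (w, t) = 0) :
    ∃ M, ∀ w ∈ P, ∀ f : ℝ → ℂ, (∀ t ∈ K, (f t).re ≤ 0) →
      ‖∫ t, Complex.exp (f t) * ψ (w, t)‖ ≤ M := by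
  obtain ⟨B, hB⟩ := (hP.prod hK).exists_bound_of_continuousOn hψ
  refine ⟨B * volume.real K, fun w hw f hf => ?_⟩
  rw [← setIntegral_eq_integral_of_forall_compl_eq_zero (s := K)
    fun t ht => by rw [hψK w hw t ht, mul_zero]]
  refine norm_setIntegral_le_of_norm_le_const hK.measure_lt_top fun t ht => ?_
  have hexp : ‖Complex.exp (f t)‖ ≤ 1 := by
    rw [Complex.norm_exp, Real.exp_le_one_iff]
    exact hf t ht
  rw [norm_mul]
  exact (mul_le_of_le_one_left (norm_nonneg _) hexp).trans (hB (w, t) ⟨hw, ht⟩)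

variable [NormedAddCommGroup F] [NormedSpace ℝ F]

/-- The partial derivative of `h (w, t)` in the real variable `t`. -/
noncomputable def derivSnd (h : W × ℝ → F) (q : W × ℝ) : F :=
  deriv (fun t => h (q.1, t)) q.2

theorem derivSnd_eq_zero_of_notMem {K : Set ℝ} {h : W × ℝ → F} {w : W} {t : ℝ}
    (hK : IsClosed K) (hzero : ∀ s ∉ K, h (w, s) = 0) (ht : t ∉ K) : derivSnd h (w, t) = 0 := by
  have hev : (fun s => h (w, s)) =ᶠ[𝓝 t] fun _ => 0 :=
    eventually_of_mem (hK.isOpen_compl.mem_nhds ht) hzero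
  simpa [derivSnd] using hev.deriv_eq

variable [NormedAddCommGroup W] [NormedSpace ℝ W] {Ω : Set (W × ℝ)} {P : Set W} {K : Set ℝ}

theorem contDiffOn_derivSnd {h : W × ℝ → F} (hΩ : IsOpen Ω) (hh : ContDiffOn ℝ ∞ h Ω) :
    ContDiffOn ℝ ∞ (derivSnd h) Ω := by
  have hfderiv : ContDiffOn ℝ ∞ (fun q => fderiv ℝ h q (0, 1)) Ω :=
    (hh.fderiv_of_isOpen hΩ le_rfl).clm_apply contDiffOn_const
  refine hfderiv.congr fun q hq => HasDerivAt.deriv ?_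
  have hd : HasFDerivAt h (fderiv ℝ h q) (q.1, q.2) :=
    ((hh.contDiffAt (hΩ.mem_nhds hq)).differentiableAt (by simp)).hasFDerivAt
  exact hd.comp_hasDerivAt q.2 ((hasDerivAt_const q.2 q.1).prodMk (hasDerivAt_id q.2))

theorem contDiff_slice {h : W × ℝ → F} {w : W} (hΩ : IsOpen Ω) (hK : IsClosed K)
    (hKΩ : ∀ t ∈ K, (w, t) ∈ Ω) (hh : ContDiffOn ℝ ∞ h Ω) (hzero : ∀ t ∉ K, h (w, t) = 0) :
    ContDiff ℝ ∞ fun t => h (w, t) := by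
  refine contDiff_iff_contDiffAt.2 fun t => ?_
  by_cases ht : t ∈ K
  · exact (hh.contDiffAt (hΩ.mem_nhds (hKΩ t ht))).comp t (contDiffAt_const.prodMk contDiffAt_id)
  · exact contDiffAt_const.congr_of_eventuallyEq
      (eventually_of_mem (hK.isOpen_compl.mem_nhds ht) hzero)

theorem integral_cexp_mul_eq_inv_mul_integral_derivSnd {g ψ : W × ℝ → ℂ} {w : W} {f : ℝ → ℂ}
    {τ : ℂ} (hΩ : IsOpen Ω) (hK : IsCompact K) (hKΩ : ∀ t ∈ K, (w, t) ∈ Ω)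
    (hg : ContDiffOn ℝ ∞ g Ω) (hg0 : ∀ q ∈ Ω, g q ≠ 0) (hψ : ContDiffOn ℝ ∞ ψ Ω)
    (hψK : ∀ t ∉ K, ψ (w, t) = 0) (hτ : τ ≠ 0)
    (hf : ∀ t ∈ K, HasDerivAt f (τ * g (w, t)) t) :
    ∫ t, Complex.exp (f t) * ψ (w, t) =
      -(τ⁻¹ * ∫ t, Complex.exp (f t) * derivSnd (ψ * g⁻¹) (w, t)) := by
  have hχ0 : ∀ t ∉ K, (ψ * g⁻¹) (w, t) = 0 := fun t ht => by simp [hψK t ht]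
  have hχK : tsupport (fun t => (ψ * g⁻¹) (w, t)) ⊆ K :=
    closure_minimal (Function.support_subset_iff'.2 hχ0) hK.isClosed
  have hχ : ContDiff ℝ ∞ fun t => (ψ * g⁻¹) (w, t) :=
    contDiff_slice hΩ hK.isClosed hKΩ (hψ.mul (hg.inv hg0)) hχ0
  have hgK : ContinuousOn (fun t => τ * g (w, t)) K :=
    continuousOn_const.mul (hg.continuousOn.comp (by fun_prop) hKΩ)
  have hcancel : ∀ t, Complex.exp (f t) * (τ * g (w, t)) * (ψ * g⁻¹) (w, t) =
      τ * (Complex.exp (f t) * ψ (w, t)) := by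
    intro t
    by_cases ht : t ∈ K
    · have := hg0 _ (hKΩ t ht)
      simp only [Pi.mul_apply, Pi.inv_apply]
      field_simp
    · simp [hψK t ht]
  have hparts := integral_cexp_mul_deriv (hχ.of_le (by norm_cast))
    (hK.of_isClosed_subset isClosed_closure hχK) (fun t ht => hf t (hχK ht)) (hgK.mono hχK)
  simp only [hcancel, integral_const_mul] at hparts
  simp only [derivSnd, hparts]
  field_simp

-- An integration by parts replaces `ψ` by `∂ₜ (ψ / g)`, a function with the same properties that no
-- longer involves `τ` and `f`; this keeps the bound uniform.
theorem exists_norm_integral_cexp_mul_le_div_pow {g : W × ℝ → ℂ} (hΩ : IsOpen Ω)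
    (hP : IsCompact P) (hK : IsCompact K) (hPK : P ×ˢ K ⊆ Ω) (hg : ContDiffOn ℝ ∞ g Ω)
    (hg0 : ∀ q ∈ Ω, g q ≠ 0) (k : ℕ) {ψ : W × ℝ → ℂ} (hψ : ContDiffOn ℝ ∞ ψ Ω)
    (hψK : ∀ w ∈ P, ∀ t ∉ K, ψ (w, t) = 0) :
    ∃ M, ∀ w ∈ P, ∀ (τ : ℝ) (f : ℝ → ℂ), 0 < τ →
      (∀ t ∈ K, HasDerivAt f (τ * g (w, t)) t) → (∀ t ∈ K, (f t).re ≤ 0) →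
        ‖∫ t, Complex.exp (f t) * ψ (w, t)‖ ≤ M / τ ^ k := by
  induction k generalizing ψ with
  | zero =>
    obtain ⟨M, hM⟩ := exists_norm_integral_cexp_mul_le hP hK (hψ.continuousOn.mono hPK) hψK
    exact ⟨M, fun w hw τ f _ _ hre => by simpa using hM w hw f hre⟩
  | succ k ih =>
    have hzero : ∀ w ∈ P, ∀ t ∉ K, derivSnd (ψ * g⁻¹) (w, t) = 0 := fun w hw t ht =>
      derivSnd_eq_zero_of_notMem hK.isClosed (fun s hs => by simp [hψK w hw s hs]) ht
    obtain ⟨M, hM⟩ :=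
      ih (ψ := derivSnd (ψ * g⁻¹)) (contDiffOn_derivSnd hΩ (hψ.mul (hg.inv hg0))) hzero
    refine ⟨M, fun w hw τ f hτ hf hre => ?_⟩
    rw [integral_cexp_mul_eq_inv_mul_integral_derivSnd hΩ hK (fun t ht => hPK ⟨hw, ht⟩) hg hg0 hψ
      (hψK w hw) (Complex.ofReal_ne_zero.2 hτ.ne') hf, norm_neg, norm_mul, norm_inv,
      Complex.norm_of_nonneg hτ.le]
    calc τ⁻¹ * ‖∫ t, Complex.exp (f t) * derivSnd (ψ * g⁻¹) (w, t)‖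
        ≤ τ⁻¹ * (M / τ ^ k) := by gcongr; exact hM w hw τ f hτ hf hre
      _ = M / τ ^ (k + 1) := by rw [pow_succ]; field_simp

end NonstationaryPhase

section ShortTimeFourierTransform

/-- The short-time Fourier transform of `u` with window `φ`, at time `x` and frequency `ξ`. The
window enters without complex conjugation. -/
noncomputable def stft (u φ : ℝ → ℂ) (x ξ : ℝ) : ℂ :=
  ∫ y : ℝ, u y * Complex.exp (-Complex.I * (y : ℂ) * (ξ : ℂ)) * φ (y - x)

/-- Decay of `V (x, ξ)` on `Γ` faster than any power of `(1 + x² + ξ²)^{1/2}`. -/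
def RapidlyDecreasingOn (V : ℝ → ℝ → ℂ) (Γ : Set (ℝ × ℝ)) : Prop :=
  ∀ N : ℕ, ∃ M : ℝ, ∀ x ξ : ℝ, (x, ξ) ∈ Γ →
    (1 + x ^ 2 + ξ ^ 2) ^ ((N : ℝ) / 2) * ‖V x ξ‖ ≤ M

/-- The open sector `|ξ| < C x` of the right half plane. -/
def sector (C : ℝ) : Set (ℝ × ℝ) := {z | |z.2| < C * z.1}

/-- The open double cone `|ξ| < C |x|` around the `x`-axis. -/
def doubleCone (C : ℝ) : Set (ℝ × ℝ) := {z | |z.2| < C * |z.1|}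

theorem norm_stft_le {u φ : ℝ → ℂ} {B : ℝ} (hu : ∀ y, ‖u y‖ ≤ B) (hφ : Integrable φ) (x ξ : ℝ) :
    ‖stft u φ x ξ‖ ≤ B * ∫ y, ‖φ y‖ := by
  rw [← integral_sub_right_eq_self (fun y => ‖φ y‖) x, ← integral_const_mul]
  refine norm_integral_le_of_norm_le ((hφ.norm.comp_sub_right x).const_mul B)
    (Eventually.of_forall fun y => ?_)
  have hchar : ‖Complex.exp (-Complex.I * (y : ℂ) * (ξ : ℂ))‖ = 1 := by simp [Complex.norm_exp]
  rw [norm_mul, norm_mul, hchar, mul_one]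
  exact mul_le_mul_of_nonneg_right (hu y) (norm_nonneg _)

theorem stft_neg_neg (u φ : ℝ → ℂ) (x ξ : ℝ) :
    stft u φ (-x) (-ξ) = stft (fun y => u (-y)) (fun y => φ (-y)) x ξ := by
  rw [stft, ← integral_neg_eq_self]
  refine integral_congr_ae (Eventually.of_forall fun y => ?_)
  have harg : -y - -x = -(y - x) := by ring
  simp only [Complex.ofReal_neg, mul_neg, neg_mul, neg_neg, harg]

theorem stft_eq_integral_translate (u φ : ℝ → ℂ) (x ξ : ℝ) :
    stft u φ x ξ =
      ∫ t : ℝ, u (x + t) * Complex.exp (-Complex.I * ((x + t : ℝ) : ℂ) * (ξ : ℂ)) * φ t := by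
  rw [stft, ← integral_add_left_eq_self _ x]
  simp only [add_sub_cancel_left]

theorem isOpen_doubleCone (C : ℝ) : IsOpen (doubleCone C) :=
  isOpen_lt (by fun_prop) (by fun_prop)

theorem zero_notMem_doubleCone (C : ℝ) : ((0 : ℝ), (0 : ℝ)) ∉ doubleCone C := by
  simp [doubleCone]

theorem smul_mem_doubleCone {C r : ℝ} {z : ℝ × ℝ} (hz : z ∈ doubleCone C) (hr : 0 < r) :
    r • z ∈ doubleCone C := by
  simp only [doubleCone, mem_ofPred_eq, Prod.smul_fst, Prod.smul_snd, smul_eq_mul, abs_mul,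
    abs_of_pos hr, mul_left_comm C] at hz ⊢
  exact mul_lt_mul_of_pos_left hz hr

theorem exists_mem_doubleCone {x : ℝ} (hx : x ≠ 0) (ξ : ℝ) :
    ∃ C, 0 < C ∧ (x, ξ) ∈ doubleCone C := by
  have hx' : 0 < |x| := abs_pos.2 hx
  refine ⟨|ξ| / |x| + 1, by positivity, ?_⟩
  simp only [doubleCone, mem_ofPred_eq, add_mul, div_mul_cancel₀ _ hx'.ne', one_mul]
  linarith

theorem rapidlyDecreasingOn_doubleCone {V : ℝ → ℝ → ℂ} {C : ℝ}
    (hright : RapidlyDecreasingOn V (sector C))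
    (hleft : RapidlyDecreasingOn (fun x ξ => V (-x) (-ξ)) (sector C)) :
    RapidlyDecreasingOn V (doubleCone C) := by
  intro N
  obtain ⟨M₁, hM₁⟩ := hright N
  obtain ⟨M₂, hM₂⟩ := hleft N
  refine ⟨max M₁ M₂, fun x ξ hz => ?_⟩
  rcases le_total 0 x with hx | hx
  · exact (hM₁ x ξ (by simpa [sector, doubleCone, abs_of_nonneg hx] using hz)).trans
      (le_max_left _ _)
  · have := hM₂ (-x) (-ξ) (by simpa [sector, doubleCone, abs_of_nonpos hx] using hz)
    simp only [neg_neg, neg_sq] at this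
    exact this.trans (le_max_right _ _)

theorem one_add_sq_add_sq_rpow_le {C x y ξ : ℝ} (hx : |x| ≤ y) (hy : 1 ≤ y)
    (hξ : |ξ| ≤ C * y) (N : ℕ) :
    (1 + x ^ 2 + ξ ^ 2) ^ ((N : ℝ) / 2) ≤ (√(2 + C ^ 2) * y) ^ N := by
  have hx2 : x ^ 2 ≤ y ^ 2 := sq_le_sq.2 (hx.trans (le_abs_self y))
  have hξ2 : ξ ^ 2 ≤ (C * y) ^ 2 := sq_le_sq.2 (hξ.trans (le_abs_self _))
  have hsqrt : √(1 + x ^ 2 + ξ ^ 2) ≤ √(2 + C ^ 2) * y := by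
    rw [← Real.sqrt_sq (zero_le_one.trans hy), ← Real.sqrt_mul (by positivity)]
    exact Real.sqrt_le_sqrt (by nlinarith)
  rw [Real.rpow_div_two_eq_sqrt _ (by positivity), Real.rpow_natCast]
  gcongr

theorem rapidlyDecreasingOn_sector {V : ℝ → ℝ → ℂ} {B C : ℝ} (hC : 0 ≤ C)
    (hbdd : ∀ x ξ, ‖V x ξ‖ ≤ B)
    (hdecay : ∀ N : ℕ, ∃ M, ∀ᶠ x in atTop, ∀ ξ, |ξ| ≤ C * x → ‖V x ξ‖ ≤ M / x ^ N) :
    RapidlyDecreasingOn V (sector C) := by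
  intro N
  obtain ⟨M, hM⟩ := hdecay N
  obtain ⟨R, hR⟩ := eventually_atTop.1 (hM.and (eventually_ge_atTop 1))
  have hR1 : 1 ≤ R := (hR R le_rfl).2
  refine ⟨max ((√(2 + C ^ 2) * R) ^ N * B) (√(2 + C ^ 2) ^ N * M), fun x ξ hξ => ?_⟩
  have hξ : |ξ| < C * x := hξ
  have hx : 0 < x := pos_of_mul_pos_right ((abs_nonneg ξ).trans_lt hξ) hC
  rcases le_total x R with hxR | hRx
  · refine le_max_of_le_left ?_
    gcongr
    · exact one_add_sq_add_sq_rpow_le (by rwa [abs_of_pos hx]) hR1 (hξ.le.trans (by gcongr)) N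
    · exact hbdd x ξ
  · refine le_max_of_le_right ?_
    calc (1 + x ^ 2 + ξ ^ 2) ^ ((N : ℝ) / 2) * ‖V x ξ‖
        ≤ (√(2 + C ^ 2) * x) ^ N * (M / x ^ N) := by
          gcongr
          · exact one_add_sq_add_sq_rpow_le (abs_of_pos hx).le (hR1.trans hRx) hξ.le N
          · exact (hR x hRx).1 ξ hξ.le
      _ = √(2 + C ^ 2) ^ N * M := by
          rw [mul_pow]
          field_simp

end ShortTimeFourierTransform

section PowerPhase

variable {c : ℂ} {p : ℝ}

/-- The phase, in the variable `t = y - x`, of the short-time Fourier transform of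
`y ↦ exp (c y ^ p)` at `(x, ξ)`. -/
noncomputable def phase (c : ℂ) (p x ξ t : ℝ) : ℂ :=
  c * (((x + t) ^ p : ℝ) : ℂ) + -Complex.I * ((x + t : ℝ) : ℂ) * (ξ : ℂ)

/-- The derivative of `phase c p x ξ` divided by `x ^ (p - 1)`, as a function of `((s, η), t)` where
`s = 1 / x` and `η = ξ / x ^ (p - 1)`. It extends smoothly to `s = 0`, which is `x = ∞`. -/
noncomputable def scaledPhaseDeriv (c : ℂ) (p : ℝ) (q : (ℝ × ℝ) × ℝ) : ℂ :=
  c * p * (((1 + q.1.1 * q.2) ^ (p - 1) : ℝ) : ℂ) - Complex.I * (q.1.2 : ℂ)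

/-- The set on which `scaledPhaseDeriv c p` is smooth and does not vanish. -/
def scaledPhaseDomain (c : ℂ) (p : ℝ) : Set ((ℝ × ℝ) × ℝ) :=
  {q | 0 < 1 + q.1.1 * q.2} ∩ scaledPhaseDeriv c p ⁻¹' {0}ᶜ

theorem contDiffOn_scaledPhaseDeriv (c : ℂ) (p : ℝ) :
    ContDiffOn ℝ ∞ (scaledPhaseDeriv c p) {q | 0 < 1 + q.1.1 * q.2} := by
  have hpow : ContDiffOn ℝ ∞ (fun q : (ℝ × ℝ) × ℝ => (1 + q.1.1 * q.2) ^ (p - 1))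
      {q | 0 < 1 + q.1.1 * q.2} :=
    ContDiffOn.rpow_const_of_ne (by fun_prop) fun q hq => ne_of_gt hq
  have hη : ContDiff ℝ ∞ fun q : (ℝ × ℝ) × ℝ => ((q.1.2 : ℝ) : ℂ) :=
    Complex.ofRealCLM.contDiff.comp (by fun_prop)
  exact (contDiffOn_const.mul (Complex.ofRealCLM.contDiff.comp_contDiffOn hpow)).sub
    (contDiff_const.mul hη).contDiffOn

theorem isOpen_scaledPhaseDomain (c : ℂ) (p : ℝ) : IsOpen (scaledPhaseDomain c p) :=
  (contDiffOn_scaledPhaseDeriv c p).continuousOn.isOpen_inter_preimage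
    (isOpen_lt (by fun_prop) (by fun_prop)) isOpen_compl_singleton

theorem zero_mem_scaledPhaseDomain (hc : c ≠ 0) (hp : p ≠ 0) (t : ℝ) :
    ((0 : ℝ × ℝ), t) ∈ scaledPhaseDomain c p := by
  simp [scaledPhaseDomain, scaledPhaseDeriv, hc, hp]

theorem exists_closedBall_prod_subset_scaledPhaseDomain (hc : c ≠ 0) (hp : p ≠ 0) {K : Set ℝ}
    (hK : IsCompact K) : ∃ δ > 0, Metric.closedBall 0 δ ×ˢ K ⊆ scaledPhaseDomain c p := by
  have hsub : ({0} : Set (ℝ × ℝ)) ×ˢ K ⊆ scaledPhaseDomain c p := by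
    rintro ⟨w, t⟩ ⟨rfl, -⟩
    exact zero_mem_scaledPhaseDomain hc hp t
  obtain ⟨U, V, hU, -, hU0, hKV, hUV⟩ :=
    generalized_tube_lemma isCompact_singleton hK (isOpen_scaledPhaseDomain c p) hsub
  obtain ⟨δ, hδ, hδU⟩ :=
    Metric.nhds_basis_closedBall.mem_iff.1 (hU.mem_nhds (singleton_subset_iff.1 hU0))
  exact ⟨δ, hδ, (prod_mono hδU hKV).trans hUV⟩

-- Here `p > 2` enters: `|ξ| ≤ C x` only gives `|ξ| / x ^ (p - 1) ≤ C x ^ (-(p - 2))`.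
theorem eventually_scaled_mem_closedBall (hp : 2 < p) (C : ℝ) {δ : ℝ} (hδ : 0 < δ) :
    ∀ᶠ x : ℝ in atTop, ∀ ξ : ℝ, |ξ| ≤ C * x →
      (x⁻¹, ξ / x ^ (p - 1)) ∈ Metric.closedBall (0 : ℝ × ℝ) δ := by
  have hs : ∀ᶠ x : ℝ in atTop, x⁻¹ ≤ δ := tendsto_inv_atTop_zero.eventually_le_const hδ
  have hη : ∀ᶠ x : ℝ in atTop, C * x ^ (-(p - 2)) ≤ δ := by
    have hlim := (tendsto_rpow_neg_atTop (show 0 < p - 2 by linarith)).const_mul C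
    rw [mul_zero] at hlim
    exact hlim.eventually_le_const hδ
  filter_upwards [hs, hη, eventually_gt_atTop 0] with x hxs hxη hx ξ hξ
  have hpow : x * x ^ (-(p - 1)) = x ^ (-(p - 2)) := by
    rw [← Real.rpow_one_add' hx.le (by linarith)]
    congr 1
    ring
  rw [mem_closedBall_zero_iff, Prod.norm_mk, max_le_iff, Real.norm_of_nonneg (by positivity),
    norm_div, Real.norm_eq_abs, Real.norm_of_nonneg (by positivity), div_eq_mul_inv,
    ← Real.rpow_neg hx.le]
  refine ⟨hxs, le_trans ?_ hxη⟩
  rw [← hpow, ← mul_assoc]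
  gcongr

theorem hasDerivAt_phase (c : ℂ) (p ξ : ℝ) {x t : ℝ} (hx : 0 < x) (hxt : 0 < x + t) :
    HasDerivAt (phase c p x ξ)
      ((x ^ (p - 1) : ℝ) * scaledPhaseDeriv c p ((x⁻¹, ξ / x ^ (p - 1)), t)) t := by
  have hadd : HasDerivAt (fun t => x + t) 1 t := (hasDerivAt_id t).const_add x
  have hpow := ((hadd.rpow_const (p := p) (Or.inl hxt.ne')).ofReal_comp).const_mul c
  have hlin := (hadd.ofReal_comp.const_mul (-Complex.I)).mul_const (ξ : ℂ)
  have hfactor : (x + t) ^ (p - 1) = x ^ (p - 1) * (1 + x⁻¹ * t) ^ (p - 1) := by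
    have hmul : x * (1 + x⁻¹ * t) = x + t := by field_simp
    have hone : 0 < 1 + x⁻¹ * t := pos_of_mul_pos_right (hmul ▸ hxt) hx.le
    rw [← Real.mul_rpow hx.le hone.le, hmul]
  have hxp : ((x ^ (p - 1) : ℝ) : ℂ) ≠ 0 := Complex.ofReal_ne_zero.2 (by positivity)
  refine (hpow.add hlin).congr_deriv ?_
  simp only [scaledPhaseDeriv, hfactor]
  push_cast
  field_simp
  ring

theorem re_phase_nonpos (hc : c.re ≤ 0) (p ξ : ℝ) {x t : ℝ} (hxt : 0 ≤ x + t) :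
    (phase c p x ξ t).re ≤ 0 := by
  have hre : (phase c p x ξ t).re = c.re * (x + t) ^ p := by simp [phase]
  rw [hre]
  exact mul_nonpos_of_nonpos_of_nonneg hc (by positivity)

theorem stft_eq_integral_cexp_phase {v φ : ℝ → ℂ} {x : ℝ} (ξ : ℝ)
    (hv : ∀ y > 0, v y = Complex.exp (c * ((y ^ p : ℝ) : ℂ)))
    (hφ : ∀ t, φ t ≠ 0 → 0 < x + t) :
    stft v φ x ξ = ∫ t, Complex.exp (phase c p x ξ t) * φ t := by
  rw [stft_eq_integral_translate]
  refine integral_congr_ae (Eventually.of_forall fun t => ?_)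
  by_cases ht : φ t = 0
  · simp [ht]
  · simp only [hv (x + t) (hφ t ht), phase, Complex.exp_add]

theorem exists_eventually_norm_stft_le_div_pow {v φ : ℝ → ℂ} (hp : 2 < p) (hc : c ≠ 0)
    (hcre : c.re ≤ 0) (hv : ∀ y > 0, v y = Complex.exp (c * ((y ^ p : ℝ) : ℂ)))
    (hφ : ContDiff ℝ ∞ φ) (hφc : HasCompactSupport φ) (C : ℝ) (N : ℕ) :
    ∃ M, ∀ᶠ x in atTop, ∀ ξ, |ξ| ≤ C * x → ‖stft v φ x ξ‖ ≤ M / x ^ N := by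
  obtain ⟨δ, hδ, hsub⟩ :=
    exists_closedBall_prod_subset_scaledPhaseDomain hc (zero_lt_two.trans hp).ne' hφc
  obtain ⟨M, hM⟩ := exists_norm_integral_cexp_mul_le_div_pow (isOpen_scaledPhaseDomain c p)
    (isCompact_closedBall 0 δ) hφc hsub ((contDiffOn_scaledPhaseDeriv c p).mono inter_subset_left)
    (fun q hq => hq.2) N (ψ := fun q => φ q.2) (hφ.comp contDiff_snd).contDiffOn
    (fun _ _ t ht => image_eq_zero_of_notMem_tsupport ht)
  refine ⟨|M|, ?_⟩
  filter_upwards [eventually_scaled_mem_closedBall hp C hδ, eventually_ge_atTop 1]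
    with x hball hx ξ hξ
  have hx0 : 0 < x := by linarith
  have hpos : ∀ t ∈ tsupport φ, 0 < x + t := fun t ht => by
    have hmem : ((x⁻¹, ξ / x ^ (p - 1)), t) ∈ scaledPhaseDomain c p := hsub ⟨hball ξ hξ, ht⟩
    have hone : 0 < 1 + x⁻¹ * t := hmem.1
    have hmul : x * (1 + x⁻¹ * t) = x + t := by field_simp
    exact hmul ▸ mul_pos hx0 hone
  rw [stft_eq_integral_cexp_phase ξ hv fun t ht => hpos t (subset_tsupport φ ht)]
  calc ‖∫ t, Complex.exp (phase c p x ξ t) * φ t‖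
      ≤ M / (x ^ (p - 1)) ^ N :=
        hM _ (hball ξ hξ) _ (phase c p x ξ) (by positivity)
          (fun t ht => hasDerivAt_phase c p ξ hx0 (hpos t ht))
          (fun t ht => re_phase_nonpos hcre p ξ (hpos t ht).le)
    _ ≤ |M| / (x ^ (p - 1)) ^ N := by gcongr; exact le_abs_self M
    _ ≤ |M| / x ^ N := by gcongr; exact Real.self_le_rpow_of_one_le hx (by linarith)

theorem rapidlyDecreasingOn_stft_sector {v φ : ℝ → ℂ} {B C : ℝ} (hp : 2 < p) (hc : c ≠ 0)
    (hcre : c.re ≤ 0) (hvB : ∀ y, ‖v y‖ ≤ B)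
    (hv : ∀ y > 0, v y = Complex.exp (c * ((y ^ p : ℝ) : ℂ)))
    (hφ : ContDiff ℝ ∞ φ) (hφc : HasCompactSupport φ) (hC : 0 ≤ C) :
    RapidlyDecreasingOn (stft v φ) (sector C) :=
  rapidlyDecreasingOn_sector hC
    (norm_stft_le hvB (hφ.continuous.integrable_of_hasCompactSupport hφc))
    (exists_eventually_norm_stft_le_div_pow hp hc hcre hv hφ hφc C)

end PowerPhase

section ChirpU

theorem sin_pi_mul_nonneg {p : ℝ} {n : ℕ} (hlow : 2 * (n : ℝ) ≤ p) (hhigh : p ≤ 2 * (n : ℝ) + 1) :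
    0 ≤ Real.sin (Real.pi * p) := by
  rw [← Real.sin_sub_nat_mul_two_pi (Real.pi * p) n]
  have hpi := Real.pi_pos
  apply Real.sin_nonneg_of_nonneg_of_le_pi <;> nlinarith

theorem u_of_nonneg (p : ℝ) {y : ℝ} (hy : 0 ≤ y) :
    u p y = Complex.exp (Complex.I * ((y ^ p : ℝ) : ℂ)) :=
  if_pos hy

theorem u_neg_of_pos (p : ℝ) {y : ℝ} (hy : 0 < y) :
    u p (-y) = Complex.exp ((Complex.I * (Real.cos (Real.pi * p) : ℂ)
      - (Real.sin (Real.pi * p) : ℂ)) * ((y ^ p : ℝ) : ℂ)) := by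
  rw [u, if_neg (by linarith), abs_neg, abs_of_pos hy]

theorem I_mul_cos_sub_sin_ne_zero (θ : ℝ) :
    Complex.I * (Real.cos θ : ℂ) - (Real.sin θ : ℂ) ≠ 0 := by
  have hexp : Complex.I * (Real.cos θ : ℂ) - (Real.sin θ : ℂ) =
      Complex.I * Complex.exp (θ * Complex.I) := by
    rw [Complex.exp_mul_I, ← Complex.ofReal_cos, ← Complex.ofReal_sin]
    linear_combination (-(Real.sin θ : ℂ)) * Complex.I_mul_I
  rw [hexp]
  exact mul_ne_zero Complex.I_ne_zero (Complex.exp_ne_zero _)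

theorem re_I_mul_cos_sub_sin (θ : ℝ) :
    (Complex.I * (Real.cos θ : ℂ) - (Real.sin θ : ℂ)).re = -Real.sin θ := by
  rw [Complex.sub_re, Complex.re_mul_ofReal, Complex.I_re, Complex.ofReal_re, zero_mul, zero_sub]

theorem norm_u_le_one {p : ℝ} (hsin : 0 ≤ Real.sin (Real.pi * p)) (y : ℝ) : ‖u p y‖ ≤ 1 := by
  rcases le_or_gt 0 y with hy | hy
  · rw [u_of_nonneg p hy, mul_comm, Complex.norm_exp_ofReal_mul_I]
  · rw [← neg_neg y, u_neg_of_pos p (neg_pos.2 hy), Complex.norm_exp, Real.exp_le_one_iff,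
      Complex.re_mul_ofReal, re_I_mul_cos_sub_sin, neg_mul, neg_nonpos]
    exact mul_nonneg hsin (Real.rpow_nonneg (neg_pos.2 hy).le p)

theorem rapidlyDecreasingOn_stft_u {p C : ℝ} (hp : 2 < p) (hsin : 0 ≤ Real.sin (Real.pi * p))
    {φ : ℝ → ℂ} (hφ : ContDiff ℝ ∞ φ) (hφc : HasCompactSupport φ) (hC : 0 ≤ C) :
    RapidlyDecreasingOn (stft (u p) φ) (doubleCone C) := by
  refine rapidlyDecreasingOn_doubleCone ?_ ?_
  · exact rapidlyDecreasingOn_stft_sector hp Complex.I_ne_zero Complex.I_re.le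
      (norm_u_le_one hsin) (fun y hy => u_of_nonneg p hy.le) hφ hφc hC
  · simp only [stft_neg_neg]
    exact rapidlyDecreasingOn_stft_sector hp (I_mul_cos_sub_sin_ne_zero _)
      (by rw [re_I_mul_cos_sub_sin]; linarith) (fun y => norm_u_le_one hsin (-y))
      (fun y hy => u_neg_of_pos p hy) (hφ.comp contDiff_neg)
      (hφc.comp_homeomorph (Homeomorph.neg ℝ)) hC

end ChirpU

theorem stmt_13_general {p : ℝ} (hp : 2 < p) (hsin : 0 ≤ Real.sin (Real.pi * p)) {φ : ℝ → ℂ}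
    (hφ : ContDiff ℝ ∞ φ) (hφc : HasCompactSupport φ) {x₀ : ℝ} (ξ₀ : ℝ) (hx₀ : x₀ ≠ 0) :
    ∃ Γ : Set (ℝ × ℝ), IsOpen Γ ∧ ((0 : ℝ), (0 : ℝ)) ∉ Γ ∧
      (∀ z ∈ Γ, ∀ r : ℝ, 0 < r → r • z ∈ Γ) ∧ (x₀, ξ₀) ∈ Γ ∧
        RapidlyDecreasingOn (stft (u p) φ) Γ := by
  obtain ⟨C, hC, hmem⟩ := exists_mem_doubleCone hx₀ ξ₀
  exact ⟨doubleCone C, isOpen_doubleCone C, zero_notMem_doubleCone C,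
    fun z hz r hr => smul_mem_doubleCone hz hr, hmem,
    rapidlyDecreasingOn_stft_u hp hsin hφ hφc hC.le⟩

/-- Proposition `frequencyaxis`.  If `p > 2` and `2n ≤ p ≤ 2n+1` for
some positive integer `n`, then for every real-valued `φ ∈ C_c^∞(ℝ)` supported in
`[−1,1]` and every `(x₀,ξ₀) ≠ (0,0)` with `x₀ ≠ 0` there is an open cone
`Γ ⊆ ℝ² \ {0}` containing `(x₀,ξ₀)` on which the short-time Fourier transform of `u_p`
with window `φ` decays faster than any power of `(1+x²+ξ²)^{1/2}`; i.e.
`WF(u_p) ⊆ {0} × (ℝ \ {0})`. -/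
theorem stmt_13 (p : ℝ) (hp2 : 2 < p) (n : ℕ) (hn : 1 ≤ n)
    (hlow : 2 * (n : ℝ) ≤ p) (hhigh : p ≤ 2 * (n : ℝ) + 1) :
    ∀ φ : ℝ → ℝ, ContDiff ℝ (⊤ : ℕ∞) φ → Function.support φ ⊆ Set.Icc (-1 : ℝ) 1 →
      ∀ x₀ ξ₀ : ℝ, x₀ ≠ 0 →
        ∃ Γ : Set (ℝ × ℝ), IsOpen Γ ∧ ((0 : ℝ), (0 : ℝ)) ∉ Γ ∧
          (∀ z ∈ Γ, ∀ r : ℝ, 0 < r → r • z ∈ Γ) ∧ (x₀, ξ₀) ∈ Γ ∧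
          ∀ N : ℕ, ∃ M : ℝ, ∀ x ξ : ℝ, (x, ξ) ∈ Γ →
            (1 + x ^ 2 + ξ ^ 2) ^ ((N : ℝ) / 2) *
              ‖∫ y : ℝ, u p y * Complex.exp (-(Complex.I) * (y : ℂ) * (ξ : ℂ))
                  * (φ (y - x) : ℂ)‖ ≤ M := by
  intro φ hφ hsupp x₀ ξ₀ hx₀
  have hφc : HasCompactSupport φ := .of_support_subset_isCompact isCompact_Icc hsupp
  exact stmt_13_general hp2 (sin_pi_mul_nonneg hlow hhigh) (Complex.ofRealCLM.contDiff.comp hφ)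
    (hφc.comp_left Complex.ofReal_zero) ξ₀ hx₀

end Stmt13
end
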